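/- arXiv:2604.14681 — 2 statements merged into one kernel-verified Lean document; each statement's English description precedes it below -/
import Mathlib

section
/- (Proposition 3.4.) Let d ≥ 1. Let ρ^{(1)} : ℝ^d → (0,∞) be measurable, let ρ^{(2)} : (ℝ^d)² → ℝ be symmetric measurable, and let (ρ_T^{(n)})_{n≥1} be symmetric measurable functions ρ_T^{(n)} : (ℝ^d)^n → ℝ with ρ_T^{(1)} = ρ^{(1)} and ρ^{(2)} = ρ_T^{(2)} + ρ^{(1)}⊗ρ^{(1)}. Assume there are constants M, A, D_ρ > 0 such that for every bounded measurable Λ ⊆ ℝ^d, every k ≥ 1, every m ∈ {1,2} and all x₁,…,x_m ∈ ℝ^d: ∫_{Λ^k} |ρ_T^{(m+k)}(x₁,…,x_m,y₁,…,y_k)| dy ≤ (m+k−1)! · M · A^m · D_ρ^k · ∏_{i=1}^{m} ρ^{(1)}(x_i); and assume there is d₀ > 0 such that ρ^{(1)}(x₁)ρ^{(1)}(x₂) ≤ d₀ · ρ^{(2)}(x₁,x₂) for all x₁, x₂ ∈ ℝ^d (in particular ρ^{(2)} > 0). For x₁, x₂ ∈ ℝ^d define the family (ω^{(k)}(x₁,x₂;·))_{k≥1}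 by the recursion: ω^{(1)}(x₁,x₂;y) = ρ_T^{(3)}(x₁,x₂,y)/ρ^{(2)}(x₁,x₂), and for k ≥ 2, ω^{(k)}(x₁,x₂;y₁,…,y_k) = ρ_T^{(2+k)}(x₁,x₂,y)/ρ^{(2)}(x₁,x₂) − (ρ_T^{(2)}(x₁,x₂)/ρ^{(2)}(x₁,x₂)) Σ_{(σ₁,σ₂)} [ρ_T^{(1+|σ₁|)}(x₁,y_{σ₁})/ρ^{(1)}(x₁)][ρ_T^{(1+|σ₂|)}(x₂,y_{σ₂})/ρ^{(1)}(x₂)] − Σ_{(σ₁,σ₂,σ₃), 0<|σ₃|<k} [ρ_T^{(1+|σ₁|)}(x₁,y_{σ₁})/ρ^{(1)}(x₁)][ρ_T^{(1+|σ₂|)}(x₂,y_{σ₂})/ρ^{(1)}(x₂)] Σ_{l=1}^{|σ₃|}(1/l!)Σ_{π∈Π_l(σ₃)}∏_{i=1}^{l} ω^{(|π_i|)}(x₁,x₂;y_{π_i}) − Σ_{l=2}^{k}(1/l!)Σ_{π∈Π_l({1,…,k})}∏_{i=1}^{l} ω^{(|π_i|)}(x₁,x₂;y_{π_i}). Then there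 exist constants Ĉ₂ > 0 and χ > 0, depending only on M, A and d₀ (and not on D_ρ, Λ, x₁, x₂), such that for every bounded measurable Λ ⊆ ℝ^d, every k ≥ 1 and all x₁, x₂ ∈ ℝ^d: ∫_{Λ^k} |ω^{(k)}(x₁,x₂;y₁,…,y_k)| dy ≤ k! · Ĉ₂ · D_ρ^k · χ^k. -/
open MeasureTheory Finset

abbrev CF (E : Type) : Type := (n : ℕ) → (Fin n → E) → ℝ

namespace CF

variable {E : Type}

/-- Symmetry of a configuration functional under permutations of the arguments. -/
def IsSymm (F : CF E) : Prop :=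
  ∀ (n : ℕ) (σ : Equiv.Perm (Fin n)) (x : Fin n → E), F n (x ∘ σ) = F n x

/-- The subtuple of `x` with indices in `I`, listed in increasing order. -/
noncomputable def sub {n : ℕ} (x : Fin n → E) (I : Finset (Fin n)) : Fin I.card → E :=
  fun i => x (I.orderIsoOfFin rfl i).1

/-- The convolution `Ψ ∗ Φ`. -/
noncomputable def conv (Ψ Φ : CF E) : CF E :=
  fun n x => ∑ I : Finset (Fin n), Ψ I.card (sub x I) * Φ Iᶜ.card (sub x Iᶜ)

/-- The unit `𝟙`. -/
def unit : CF E := fun n _ => if n = 0 then 1 else 0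

/-- Star-powers `Φ^{∗m}`. -/
noncomputable def starPow (Φ : CF E) : ℕ → CF E
  | 0 => unit
  | m + 1 => conv Φ (starPow Φ m)

/-- The star-exponential `exp∗ Φ = 𝟙 + Σ_{m≥1} Φ^{∗m}/m!`; on `A₀` the sum in the
`n`-th component is finite since `(Φ^{∗m})^{(n)} = 0` for `m > n`. -/
noncomputable def starExp (Φ : CF E) : CF E :=
  fun n x => ∑ m ∈ Finset.range (n + 1), ((m.factorial : ℝ))⁻¹ * starPow Φ m n x

/-- The derivative `D_x`. -/
noncomputable def D (x : E) (Φ : CF E) : CF E := fun n y => Φ (n + 1) (Fin.cons x y)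

/-- The second derivative `D_{x₁,x₂} = D_{x₁} ∘ D_{x₂}`. -/
noncomputable def D2 (x₁ x₂ : E) (Φ : CF E) : CF E := D x₁ (D x₂ Φ)

end CF

namespace CF

/-- Ordered partitions of the subset `S ⊆ {1,…,n}` into `l` nonempty, pairwise
disjoint parts whose union is `S`. -/
def ordPartsOf (l : ℕ) {n : ℕ} (S : Finset (Fin n)) : Finset (Fin l → Finset (Fin n)) :=
  Finset.univ.filter fun π =>
    (∀ i, (π i).Nonempty) ∧ (∀ i j, i ≠ j → Disjoint (π i) (π j)) ∧
      (∀ a, a ∈ S ↔ ∃ i, a ∈ π i)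

/-- Set partitions of `{1,…,n}` into nonempty blocks, encoded as the finset of blocks. -/
def setPartitions (n : ℕ) : Finset (Finset (Finset (Fin n))) :=
  Finset.univ.filter fun P =>
    (∀ B ∈ P, B.Nonempty) ∧ (∀ B ∈ P, ∀ B' ∈ P, B ≠ B' → Disjoint B B') ∧
      (∀ a : Fin n, ∃ B ∈ P, a ∈ B)

end CF
/-- Euclidean space `ℝ^d`. -/
abbrev Euc (d : ℕ) : Type := EuclideanSpace ℝ (Fin d)

/-- The product measure on `Λ^n ⊆ (ℝ^d)^n` (Lebesgue measure restricted to `Λ`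
in each coordinate). -/
noncomputable def piRestrict (d : ℕ) (Λ : Set (Euc d)) (n : ℕ) :
    MeasureTheory.Measure (Fin n → Euc d) :=
  MeasureTheory.Measure.pi fun _ => MeasureTheory.volume.restrict Λ

/-- Lebesgue measure on `(ℝ^d)^n`. -/
noncomputable def piVol (d : ℕ) (n : ℕ) : MeasureTheory.Measure (Fin n → Euc d) :=
  MeasureTheory.Measure.pi fun _ => MeasureTheory.volume

/-
For a configuration functional `Φ` put `N(Φ) = ∑ₙ wⁿ ‖Φ^{(n)}‖_{L¹(Λⁿ)} / n!`. Since the binomial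
coefficients in the convolution cancel the factorials, `N(Ψ ∗ Φ) ≤ N(Ψ) N(Φ)`.

Write `f_i = D_{x_i} ρ_T / ρ^{(1)}(x_i)`, `t = D_{x₁} D_{x₂} ρ_T / ρ^{(2)}(x₁, x₂)`, `c = t^{(0)}`,
and let `F` be `f₁ ∗ f₂` without its degree-zero part. In degrees at least two the recursion reads
`ω = t - c F - (exp∗ ω - 𝟙) ∗ F - (exp∗ ω - 𝟙 - ω)`, where the right-hand side only involves `ω` in
lower degrees. Hence the norms `S_n` of the truncations of `ω` to degrees below `n` satisfy
`S_{n+1} ≤ N(t₊) + (|c| + 2 S_n) N(F) + 2 S_n²` as long as `S_n ≤ 1/2`. For `w = (χ D_ρ)⁻¹` with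
`χ` large, the terms `N(t₊)` and `N(F)` are small and `S_n ≤ 1/4` propagates to all `n`. Reading
off the coefficient of degree `k` gives the bound with `Ĉ₂ = 1/4`.
-/

namespace CF

open scoped ENNReal Nat

section Combinatorics

variable {E : Type} {n : ℕ}

theorem apply_comp_orderEmbOfFin (Φ : CF E) (y : Fin n → E) {I : Finset (Fin n)} {m : ℕ}
    (h : #I = m) : Φ m (y ∘ I.orderEmbOfFin h) = Φ #I (sub y I) := by
  subst h
  rfl

theorem apply_sub_sub (Φ : CF E) (y : Fin n → E) (S : Finset (Fin n)) (J : Finset (Fin #S)) :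
    Φ #J (sub (sub y S) J) = Φ #(J.map (S.orderEmbOfFin rfl).toEmbedding)
      (sub y (J.map (S.orderEmbOfFin rfl).toEmbedding)) := by
  have h : S.orderEmbOfFin rfl ∘ J.orderEmbOfFin rfl =
      (J.map (S.orderEmbOfFin rfl).toEmbedding).orderEmbOfFin (card_map _) :=
    orderEmbOfFin_unique _ (fun i ↦ mem_map_of_mem _ (J.orderEmbOfFin_mem rfl i))
      ((S.orderEmbOfFin rfl).strictMono.comp (J.orderEmbOfFin rfl).strictMono)
  rw [← apply_comp_orderEmbOfFin Φ y (card_map _), ← h]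
  rfl

theorem conv_apply_sub (Ψ Φ : CF E) (y : Fin n → E) (S : Finset (Fin n)) :
    conv Ψ Φ #S (sub y S) =
      ∑ I ∈ S.powerset, Ψ #I (sub y I) * Φ #(S \ I) (sub y (S \ I)) := by
  set e := (S.orderEmbOfFin rfl).toEmbedding
  have map_univ_e : univ.map e = S := S.map_orderEmbOfFin_univ rfl
  have map_compl_e (J : Finset (Fin #S)) : Jᶜ.map e = S \ J.map e := by
    rw [compl_eq_univ_sdiff, Finset.map_sdiff, map_univ_e]
  refine sum_bij (fun J _ ↦ J.map e) (fun J _ ↦ ?_) (fun J _ J' _ h ↦ map_injective e h)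
    (fun I hI ↦ ?_) (fun J _ ↦ ?_)
  · exact mem_powerset.2 ((map_subset_map.2 (subset_univ J)).trans map_univ_e.subset)
  · obtain ⟨J, -, rfl⟩ := subset_map_iff.1 ((mem_powerset.1 hI).trans map_univ_e.symm.subset)
    exact ⟨J, mem_univ J, rfl⟩
  · rw [apply_sub_sub Ψ y S J, apply_sub_sub Φ y S Jᶜ, ← map_compl_e]

theorem mem_ordPartsOf {l : ℕ} {S : Finset (Fin n)} {π : Fin l → Finset (Fin n)} :
    π ∈ ordPartsOf l S ↔ (∀ i, (π i).Nonempty) ∧ (∀ i j, i ≠ j → Disjoint (π i) (π j)) ∧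
      ∀ a, a ∈ S ↔ ∃ i, a ∈ π i := by
  simp [ordPartsOf]

theorem cons_mem_ordPartsOf {l : ℕ} {S I : Finset (Fin n)} {π : Fin l → Finset (Fin n)} :
    (Fin.cons I π : Fin (l + 1) → Finset (Fin n)) ∈ ordPartsOf (l + 1) S ↔
      I.Nonempty ∧ I ⊆ S ∧ π ∈ ordPartsOf l (S \ I) := by
  simp only [mem_ordPartsOf, Fin.forall_fin_succ, Fin.exists_fin_succ, Fin.cons_zero,
    Fin.cons_succ, mem_sdiff, disjoint_left, subset_iff]
  grind

theorem ordPartsOf_zero (S : Finset (Fin n)) :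
    ordPartsOf 0 S = if S = ∅ then {Fin.elim0} else ∅ := by
  ext π
  split_ifs with hS
  · simp [mem_ordPartsOf, hS, Subsingleton.elim π Fin.elim0]
  · simpa [mem_ordPartsOf, eq_empty_iff_forall_notMem] using hS

theorem sum_ordPartsOf_succ {R : Type*} [AddCommMonoid R] {l : ℕ} {S : Finset (Fin n)}
    (F : (Fin (l + 1) → Finset (Fin n)) → R) :
    ∑ π ∈ ordPartsOf (l + 1) S, F π =
      ∑ I ∈ S.powerset with I.Nonempty, ∑ π ∈ ordPartsOf l (S \ I), F (Fin.cons I π) := by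
  rw [sum_sigma']
  refine (sum_nbij' (fun p ↦ Fin.cons p.1 p.2) (fun π ↦ ⟨π 0, Fin.tail π⟩) ?_ ?_ ?_ ?_ ?_).symm
  · rintro ⟨I, π⟩ h
    simp only [mem_sigma, mem_filter, mem_powerset] at h
    exact cons_mem_ordPartsOf.2 ⟨h.1.2, h.1.1, h.2⟩
  · intro π h
    rw [← Fin.cons_self_tail π, cons_mem_ordPartsOf] at h
    simpa only [mem_sigma, mem_filter, mem_powerset] using ⟨⟨h.2.1, h.1⟩, h.2.2⟩
  · exact fun p _ ↦ rfl
  · exact fun π _ ↦ Fin.cons_self_tail π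
  · exact fun p _ ↦ rfl

theorem sum_ordPartsOf_prod_eq_starPow {Φ : CF E} (hΦ : ∀ y, Φ 0 y = 0) (y : Fin n → E) (l : ℕ)
    (S : Finset (Fin n)) :
    ∑ π ∈ ordPartsOf l S, ∏ i, Φ #(π i) (sub y (π i)) = starPow Φ l #S (sub y S) := by
  induction l generalizing S with
  | zero => by_cases hS : S = ∅ <;> simp [ordPartsOf_zero, starPow, unit, hS]
  | succ l ih =>
    have nonempty_of_ne (I : Finset (Fin n))
        (hI : Φ #I (sub y I) * starPow Φ l #(S \ I) (sub y (S \ I)) ≠ 0) : I.Nonempty := by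
      rw [nonempty_iff_ne_empty]
      rintro rfl
      exact hI (mul_eq_zero_of_left (hΦ _) _)
    rw [sum_ordPartsOf_succ, starPow, conv_apply_sub,
      ← sum_filter_of_ne fun I _ ↦ nonempty_of_ne I]
    refine sum_congr rfl fun I _ ↦ ?_
    simp only [Fin.prod_univ_succ]
    rw [← ih, mul_sum]
    rfl

theorem card_pos_of_mem_ordPartsOf {l : ℕ} {S : Finset (Fin n)} {π : Fin l → Finset (Fin n)}
    (hπ : π ∈ ordPartsOf l S) (i : Fin l) : 0 < #(π i) :=
  card_pos.2 ((mem_ordPartsOf.1 hπ).1 i)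

theorem subset_of_mem_ordPartsOf {l : ℕ} {S : Finset (Fin n)} {π : Fin l → Finset (Fin n)}
    (hπ : π ∈ ordPartsOf l S) (i : Fin l) : π i ⊆ S :=
  fun a ha ↦ ((mem_ordPartsOf.1 hπ).2.2 a).2 ⟨i, ha⟩

theorem card_lt_of_mem_ordPartsOf {l : ℕ} (hl : 2 ≤ l) {S : Finset (Fin n)}
    {π : Fin l → Finset (Fin n)} (hπ : π ∈ ordPartsOf l S) (i : Fin l) : #(π i) < #S := by
  obtain ⟨nonempty, disjoint, -⟩ := mem_ordPartsOf.1 hπ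
  have : Nontrivial (Fin l) := Fin.nontrivial_iff_two_le.2 hl
  obtain ⟨j, hj⟩ := exists_ne i
  obtain ⟨b, hb⟩ := nonempty j
  exact card_lt_card ⟨subset_of_mem_ordPartsOf hπ i, fun hS ↦
    disjoint_left.1 (disjoint j i hj) hb (hS (subset_of_mem_ordPartsOf hπ j hb))⟩

end Combinatorics

section Recursion

variable {E : Type}

/-- The components of `Φ` whose degree lies in `s`, the others being replaced by zero. The bootstrap
runs over the truncations `restrictDegrees (Set.Ico 1 n) ω` of a kernel family. -/
noncomputable def restrictDegrees (s : Set ℕ) (Φ : CF E) : CF E :=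
  fun n y ↦ s.indicator (fun _ ↦ Φ n y) n

/-- The tail `∑_{m ≥ j} Φ^{∗m} / m!` of the star-exponential. As in `starExp`, the sum in degree
`n` stops at `m = n`, which loses nothing when `Φ` vanishes in degree zero. -/
noncomputable def starExpTail (j : ℕ) (Φ : CF E) : CF E :=
  fun n y ↦ ∑ m ∈ Icc j n, (m ! : ℝ)⁻¹ * starPow Φ m n y

/-- The recursion of the two-point kernels `ω^{(k)}(x₁, x₂; ·)` at a fixed pair of points. It
only sees the functionals `f_i = D_{x_i} ρ_T / ρ^{(1)}(x_i)` and
`t = D_{x₁} D_{x₂} ρ_T / ρ^{(2)}(x₁, x₂)` and the number `c = t^{(0)}`. -/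
structure IsKernelFamily (f₁ f₂ t : CF E) (c : ℝ) (ω : CF E) : Prop where
  base (y : Fin 1 → E) : ω 1 y = t 1 y
  step (k : ℕ) (hk : 2 ≤ k) (y : Fin k → E) :
    ω k y = t k y
      - c * ∑ σ : Finset (Fin k) × Finset (Fin k) with Disjoint σ.1 σ.2 ∧ σ.1 ∪ σ.2 = univ,
          f₁ #σ.1 (sub y σ.1) * f₂ #σ.2 (sub y σ.2)
      - ∑ σ : Finset (Fin k) × Finset (Fin k) × Finset (Fin k) with
            Disjoint σ.1 σ.2.1 ∧ Disjoint σ.1 σ.2.2 ∧ Disjoint σ.2.1 σ.2.2 ∧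
              σ.1 ∪ σ.2.1 ∪ σ.2.2 = univ ∧ 0 < #σ.2.2 ∧ #σ.2.2 < k,
          f₁ #σ.1 (sub y σ.1) * f₂ #σ.2.1 (sub y σ.2.1) *
            ∑ l ∈ Icc 1 #σ.2.2, (l ! : ℝ)⁻¹ *
              ∑ π ∈ ordPartsOf l σ.2.2, ∏ i : Fin l, ω #(π i) (sub y (π i))
      - ∑ l ∈ Icc 2 k, (l ! : ℝ)⁻¹ *
          ∑ π ∈ ordPartsOf l (univ : Finset (Fin k)), ∏ i : Fin l, ω #(π i) (sub y (π i))

theorem restrictDegrees_of_mem {s : Set ℕ} {n : ℕ} (hn : n ∈ s) (Φ : CF E) (y : Fin n → E) :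
    restrictDegrees s Φ n y = Φ n y :=
  Set.indicator_of_mem hn _

theorem restrictDegrees_of_notMem {s : Set ℕ} {n : ℕ} (hn : n ∉ s) (Φ : CF E) (y : Fin n → E) :
    restrictDegrees s Φ n y = 0 :=
  Set.indicator_of_notMem hn _

theorem restrictDegrees_univ (Φ : CF E) : restrictDegrees Set.univ Φ = Φ :=
  funext fun n ↦ funext fun y ↦ restrictDegrees_of_mem (Set.mem_univ n) Φ y

theorem sum_disjoint_pairs_eq_conv (Ψ Φ : CF E) {k : ℕ} (y : Fin k → E) :
    ∑ σ : Finset (Fin k) × Finset (Fin k) with Disjoint σ.1 σ.2 ∧ σ.1 ∪ σ.2 = univ,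
      Ψ #σ.1 (sub y σ.1) * Φ #σ.2 (sub y σ.2) = conv Ψ Φ k y := by
  have eq_compl {σ : Finset (Fin k) × Finset (Fin k)}
      (hσ : Disjoint σ.1 σ.2 ∧ σ.1 ∪ σ.2 = univ) : σ.2 = σ.1ᶜ :=
    (IsCompl.compl_eq ⟨hσ.1, codisjoint_iff.2 hσ.2⟩).symm
  refine sum_nbij' Prod.fst (fun I ↦ (I, Iᶜ)) (by simp) (by simp [disjoint_compl_right])
    (fun σ hσ ↦ ?_) (by simp) (fun σ hσ ↦ ?_)
  · rw [← eq_compl (mem_filter.1 hσ).2]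
  · rw [eq_compl (mem_filter.1 hσ).2]

theorem disjoint_triple_union_eq_univ_iff {α : Type*} [Fintype α] [DecidableEq α]
    {I J K : Finset α} :
    (Disjoint I J ∧ Disjoint I K ∧ Disjoint J K ∧ I ∪ J ∪ K = univ) ↔
      I ⊆ Kᶜ ∧ J = Kᶜ \ I := by
  simp only [disjoint_left, subset_iff, mem_compl, Finset.ext_iff, mem_sdiff, mem_union, mem_univ]
  grind

theorem sum_disjoint_triples {α R : Type*} [Fintype α] [DecidableEq α] [AddCommMonoid R]
    (P : Finset α → Prop) [DecidablePred P] (F : Finset α → Finset α → Finset α → R) :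
    ∑ σ : Finset α × Finset α × Finset α with
        Disjoint σ.1 σ.2.1 ∧ Disjoint σ.1 σ.2.2 ∧ Disjoint σ.2.1 σ.2.2 ∧
          σ.1 ∪ σ.2.1 ∪ σ.2.2 = univ ∧ P σ.2.2, F σ.1 σ.2.1 σ.2.2 =
      ∑ K with P K, ∑ I ∈ Kᶜ.powerset, F I (Kᶜ \ I) K := by
  have condition_iff (σ : Finset α × Finset α × Finset α) :
      (Disjoint σ.1 σ.2.1 ∧ Disjoint σ.1 σ.2.2 ∧ Disjoint σ.2.1 σ.2.2 ∧
        σ.1 ∪ σ.2.1 ∪ σ.2.2 = univ ∧ P σ.2.2) ↔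
      (σ.1 ⊆ σ.2.2ᶜ ∧ σ.2.1 = σ.2.2ᶜ \ σ.1) ∧ P σ.2.2 := by
    rw [← disjoint_triple_union_eq_univ_iff]
    tauto
  simp only [condition_iff]
  rw [sum_sigma']
  refine sum_nbij' (fun σ ↦ ⟨σ.2.2, σ.1⟩) (fun p ↦ (p.2, p.1ᶜ \ p.2, p.1)) ?_ ?_ ?_
    (fun p _ ↦ rfl) ?_
  all_goals grind

theorem sum_disjoint_triples_eq_conv (f₁ f₂ : CF E) {G : CF E} (hG : ∀ y, G 0 y = 0) {k : ℕ}
    (y : Fin k → E) :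
    ∑ σ : Finset (Fin k) × Finset (Fin k) × Finset (Fin k) with
        Disjoint σ.1 σ.2.1 ∧ Disjoint σ.1 σ.2.2 ∧ Disjoint σ.2.1 σ.2.2 ∧
          σ.1 ∪ σ.2.1 ∪ σ.2.2 = univ ∧ 0 < #σ.2.2 ∧ #σ.2.2 < k,
      f₁ #σ.1 (sub y σ.1) * f₂ #σ.2.1 (sub y σ.2.1) * G #σ.2.2 (sub y σ.2.2) =
    conv G (restrictDegrees (Set.Ici 1) (conv f₁ f₂)) k y := by
  rw [sum_disjoint_triples (fun K ↦ 0 < #K ∧ #K < k) fun I J K ↦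
    f₁ #I (sub y I) * f₂ #J (sub y J) * G #K (sub y K), sum_filter]
  refine sum_congr rfl fun K _ ↦ ?_
  have hcard : #K + #Kᶜ = k := by simp
  split_ifs with hK
  · rw [restrictDegrees_of_mem (Set.mem_Ici.2 (by lia)), conv_apply_sub, ← sum_mul, mul_comm]
  · rcases Nat.eq_zero_or_pos #K with hK' | hK'
    · obtain rfl := card_eq_zero.1 hK'
      exact (mul_eq_zero_of_left (hG _) _).symm
    · rw [restrictDegrees_of_notMem (fun h ↦ hK ⟨hK', by have := Set.mem_Ici.1 h; lia⟩), mul_zero]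

theorem starExpTail_zero_of_pos {j : ℕ} (hj : 0 < j) (Φ : CF E) (y : Fin 0 → E) :
    starExpTail j Φ 0 y = 0 := by
  rw [starExpTail, Icc_eq_empty (by lia), sum_empty]

theorem sum_ordPartsOf_eq_starExpTail {ω : CF E} {n j k : ℕ} {S : Finset (Fin k)} (y : Fin k → E)
    (h : ∀ l ∈ Icc j #S, ∀ π ∈ ordPartsOf l S, ∀ i, #(π i) < n) :
    ∑ l ∈ Icc j #S, (l ! : ℝ)⁻¹ *
        ∑ π ∈ ordPartsOf l S, ∏ i : Fin l, ω #(π i) (sub y (π i)) =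
      starExpTail j (restrictDegrees (Set.Ico 1 n) ω) #S (sub y S) := by
  refine sum_congr rfl fun l hl ↦ ?_
  rw [← sum_ordPartsOf_prod_eq_starPow fun z ↦ restrictDegrees_of_notMem (by simp) ω z]
  congr 1
  refine sum_congr rfl fun π hπ ↦ prod_congr rfl fun i _ ↦ ?_
  have hmem : #(π i) ∈ Set.Ico 1 n := ⟨card_pos_of_mem_ordPartsOf hπ i, h l hl π hπ i⟩
  exact (restrictDegrees_of_mem hmem ω _).symm

theorem apply_sub_univ (Φ : CF E) {k : ℕ} (y : Fin k → E) :
    Φ #(univ : Finset (Fin k)) (sub y univ) = Φ k y := by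
  rw [← apply_comp_orderEmbOfFin Φ y (card_fin k),
    ← orderEmbOfFin_unique (card_fin k) (fun _ ↦ mem_univ _) strictMono_id]
  rfl

variable {f₁ f₂ t ω : CF E} {c : ℝ}

theorem IsKernelFamily.apply_eq (h : IsKernelFamily f₁ f₂ t c ω) {n k : ℕ} (hk : 2 ≤ k)
    (hkn : k ≤ n) (y : Fin k → E) :
    ω k y = t k y - (c • restrictDegrees (Set.Ici 1) (conv f₁ f₂) +
      conv (starExpTail 1 (restrictDegrees (Set.Ico 1 n) ω))
        (restrictDegrees (Set.Ici 1) (conv f₁ f₂)) +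
      starExpTail 2 (restrictDegrees (Set.Ico 1 n) ω)) k y := by
  have tail_univ := sum_ordPartsOf_eq_starExpTail (ω := ω) (n := n) (j := 2) (S := univ) y
    fun l hl π hπ i ↦ by
      have := card_lt_of_mem_ordPartsOf (mem_Icc.1 hl).1 hπ i
      rw [card_fin] at this
      lia
  rw [apply_sub_univ (starExpTail 2 _), card_fin] at tail_univ
  simp only [Pi.add_apply, Pi.smul_apply, smul_eq_mul, ← sub_sub]
  rw [restrictDegrees_of_mem (Set.mem_Ici.2 (one_le_two.trans hk)), h.step k hk y,
    sum_disjoint_pairs_eq_conv, tail_univ,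
    ← sum_disjoint_triples_eq_conv f₁ f₂ (starExpTail_zero_of_pos one_pos _)]
  congr 2
  refine sum_congr rfl fun σ hσ ↦ ?_
  have hσk : #σ.2.2 < k := (mem_filter.1 hσ).2.2.2.2.2.2
  rw [sum_ordPartsOf_eq_starExpTail y fun l _ π hπ i ↦
    (card_le_card (subset_of_mem_ordPartsOf hπ i)).trans_lt (hσk.trans_le hkn)]

theorem IsKernelFamily.restrictDegrees_succ (h : IsKernelFamily f₁ f₂ t c ω) (n : ℕ) :
    restrictDegrees (Set.Ico 1 (n + 1)) ω = restrictDegrees (Set.Ico 1 (n + 1)) t -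
      restrictDegrees (Set.Ico 2 (n + 1)) (c • restrictDegrees (Set.Ici 1) (conv f₁ f₂) +
        conv (starExpTail 1 (restrictDegrees (Set.Ico 1 n) ω))
          (restrictDegrees (Set.Ici 1) (conv f₁ f₂)) +
        starExpTail 2 (restrictDegrees (Set.Ico 1 n) ω)) := by
  ext k y
  rw [Pi.sub_apply, Pi.sub_apply]
  by_cases hk : k ∈ Set.Ico 1 (n + 1)
  · rw [restrictDegrees_of_mem hk, restrictDegrees_of_mem hk]
    obtain rfl | hk₂ := hk.1.eq_or_lt
    · rw [restrictDegrees_of_notMem (by simp), sub_zero, h.base]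
    · have hmem : k ∈ Set.Ico 2 (n + 1) := ⟨hk₂, hk.2⟩
      rw [restrictDegrees_of_mem hmem]
      exact h.apply_eq hk₂ (Nat.lt_succ_iff.1 hk.2) y
  · rw [restrictDegrees_of_notMem hk, restrictDegrees_of_notMem hk,
      restrictDegrees_of_notMem fun hk' ↦ hk ⟨one_le_two.trans hk'.1, hk'.2⟩, sub_zero]

end Recursion

section Norm

variable {X : Type} [MeasurableSpace X] {μ : Measure X}

/-- The coefficient `‖Φ^{(n)}‖_{L¹(μ^n)} / n!` of the exponential generating function of the
`L¹`-norms of the components of `Φ`. -/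
noncomputable def egfCoeff (μ : Measure X) (Φ : CF X) (n : ℕ) : ℝ≥0∞ :=
  (n ! : ℝ≥0∞)⁻¹ * ∫⁻ y, ‖Φ n y‖ₑ ∂Measure.pi fun _ : Fin n ↦ μ

/-- The exponential generating function `∑ₙ wⁿ ‖Φ^{(n)}‖_{L¹(μ^n)} / n!`. For fixed `w` it is an
extended norm on configuration functionals which is submultiplicative for the convolution. -/
noncomputable def egfNorm (μ : Measure X) (w : ℝ≥0∞) (Φ : CF X) : ℝ≥0∞ :=
  ∑' n, w ^ n * egfCoeff μ Φ n

theorem measurable_sub {n : ℕ} (I : Finset (Fin n)) : Measurable fun y : Fin n → X ↦ sub y I :=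
  measurable_pi_lambda _ fun _ ↦ measurable_pi_apply _

theorem measurable_D {Φ : CF X} (hΦ : ∀ n, Measurable (Φ n)) (x : X) (n : ℕ) :
    Measurable (D x Φ n) :=
  (hΦ (n + 1)).comp <| measurable_pi_lambda _ <|
    Fin.cases measurable_const fun i ↦ measurable_pi_apply i

theorem measurable_conv {Ψ Φ : CF X} (hΨ : ∀ n, Measurable (Ψ n)) (hΦ : ∀ n, Measurable (Φ n))
    (n : ℕ) : Measurable (conv Ψ Φ n) :=
  Finset.measurable_fun_sum _ fun I _ ↦
    ((hΨ _).comp (measurable_sub I)).mul ((hΦ _).comp (measurable_sub Iᶜ))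

theorem measurable_starPow {Φ : CF X} (hΦ : ∀ n, Measurable (Φ n)) (m n : ℕ) :
    Measurable (starPow Φ m n) := by
  induction m generalizing n with
  | zero => exact measurable_const
  | succ m ih => exact measurable_conv hΦ ih n

theorem measurable_starExpTail {Φ : CF X} (hΦ : ∀ n, Measurable (Φ n)) (j n : ℕ) :
    Measurable (starExpTail j Φ n) :=
  Finset.measurable_fun_sum _ fun m _ ↦ (measurable_starPow hΦ m n).const_mul _

theorem measurable_restrictDegrees {Φ : CF X} (hΦ : ∀ n, Measurable (Φ n)) (s : Set ℕ) (n : ℕ) :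
    Measurable (restrictDegrees s Φ n) := by
  by_cases hn : n ∈ s
  · rw [funext (restrictDegrees_of_mem hn Φ)]
    exact hΦ n
  · rw [funext (restrictDegrees_of_notMem hn Φ)]
    exact measurable_const

theorem measurePreserving_sub_prod_sub_compl [SigmaFinite μ] {n : ℕ} (I : Finset (Fin n)) :
    MeasurePreserving (fun y : Fin n → X ↦ (sub y I, sub y Iᶜ)) (Measure.pi fun _ ↦ μ)
      ((Measure.pi fun _ ↦ μ).prod (Measure.pi fun _ ↦ μ)) :=
  (measurePreserving_sumPiEquivProdPi fun _ : Fin #I ⊕ Fin #Iᶜ ↦ μ).comp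
    (measurePreserving_piCongrLeft (fun _ : Fin n ↦ μ) (finSumEquivOfFinset rfl rfl)).symm

theorem lintegral_sub_mul_sub_compl [SigmaFinite μ] {n : ℕ} (I : Finset (Fin n))
    {F : (Fin #I → X) → ℝ≥0∞} {G : (Fin #Iᶜ → X) → ℝ≥0∞} (hF : Measurable F)
    (hG : Measurable G) :
    ∫⁻ y, F (sub y I) * G (sub y Iᶜ) ∂(Measure.pi fun _ ↦ μ) =
      (∫⁻ y, F y ∂Measure.pi fun _ ↦ μ) * ∫⁻ y, G y ∂Measure.pi fun _ ↦ μ := by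
  rw [← lintegral_prod_mul hF.aemeasurable hG.aemeasurable]
  exact (measurePreserving_sub_prod_sub_compl I).lintegral_comp
    ((hF.comp measurable_fst).mul (hG.comp measurable_snd))

theorem lintegral_enorm_eq_factorial_mul_egfCoeff (μ : Measure X) (Φ : CF X) (n : ℕ) :
    ∫⁻ y, ‖Φ n y‖ₑ ∂(Measure.pi fun _ ↦ μ) = n ! * egfCoeff μ Φ n :=
  (ENNReal.mul_inv_cancel_left (by simp [n.factorial_ne_zero]) (by simp)).symm

theorem egfCoeff_le_iff {Φ : CF X} {n : ℕ} {a : ℝ≥0∞} :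
    egfCoeff μ Φ n ≤ a ↔ ∫⁻ y, ‖Φ n y‖ₑ ∂(Measure.pi fun _ ↦ μ) ≤ n ! * a :=
  ENNReal.inv_mul_le_iff (by simp [n.factorial_ne_zero]) (by simp)

theorem sum_finset_fin_factorial_mul {R : Type*} [CommSemiring R] {n : ℕ} (a b : ℕ → R) :
    ∑ I : Finset (Fin n), (((#I) ! : R) * a #I) * (((#Iᶜ) ! : R) * b #Iᶜ) =
      n ! * ∑ p ∈ antidiagonal n, a p.1 * b p.2 := by
  calc ∑ I : Finset (Fin n), (((#I) ! : R) * a #I) * (((#Iᶜ) ! : R) * b #Iᶜ)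
      = ∑ I ∈ (univ : Finset (Fin n)).powerset,
          (((#I) ! : R) * a #I) * (((n - #I) ! : R) * b (n - #I)) := by
        simp only [card_compl, Fintype.card_fin, powerset_univ]
    _ = ∑ i ∈ range (n + 1),
          n.choose i • (((i ! : R) * a i) * (((n - i) ! : R) * b (n - i))) := by
        rw [sum_powerset_apply_card
          (fun i ↦ ((i ! : R) * a i) * (((n - i) ! : R) * b (n - i))), card_fin]
    _ = n ! * ∑ p ∈ antidiagonal n, a p.1 * b p.2 := by
        rw [Nat.sum_antidiagonal_eq_sum_range_succ_mk, mul_sum]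
        refine sum_congr rfl fun i hi ↦ ?_
        rw [← Nat.choose_mul_factorial_mul_factorial (mem_range_succ_iff.1 hi)]
        push_cast
        ring

theorem egfCoeff_conv_le [SigmaFinite μ] {Ψ Φ : CF X} (hΨ : ∀ n, Measurable (Ψ n))
    (hΦ : ∀ n, Measurable (Φ n)) (n : ℕ) :
    egfCoeff μ (conv Ψ Φ) n ≤ ∑ p ∈ antidiagonal n, egfCoeff μ Ψ p.1 * egfCoeff μ Φ p.2 := by
  rw [egfCoeff_le_iff, ← sum_finset_fin_factorial_mul]
  calc ∫⁻ y, ‖conv Ψ Φ n y‖ₑ ∂(Measure.pi fun _ ↦ μ)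
      ≤ ∫⁻ y, ∑ I : Finset (Fin n), ‖Ψ #I (sub y I)‖ₑ * ‖Φ #Iᶜ (sub y Iᶜ)‖ₑ
          ∂(Measure.pi fun _ ↦ μ) := by
        refine lintegral_mono fun y ↦ (enorm_sum_le _ _).trans_eq ?_
        simp only [enorm_mul]
    _ = ∑ I : Finset (Fin n), ∫⁻ y, ‖Ψ #I (sub y I)‖ₑ * ‖Φ #Iᶜ (sub y Iᶜ)‖ₑ
          ∂(Measure.pi fun _ ↦ μ) :=
        lintegral_finsetSum _ fun I _ ↦ ((hΨ _).comp (measurable_sub I)).enorm.mul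
          ((hΦ _).comp (measurable_sub Iᶜ)).enorm
    _ = ∑ I : Finset (Fin n), ((#I) ! * egfCoeff μ Ψ #I) * ((#Iᶜ) ! * egfCoeff μ Φ #Iᶜ) := by
        refine sum_congr rfl fun I _ ↦ ?_
        rw [lintegral_sub_mul_sub_compl I (hΨ _).enorm (hΦ _).enorm,
          lintegral_enorm_eq_factorial_mul_egfCoeff, lintegral_enorm_eq_factorial_mul_egfCoeff]

theorem tsum_mul_tsum_eq_tsum_antidiagonal (f g : ℕ → ℝ≥0∞) :
    (∑' n, f n) * ∑' n, g n = ∑' n, ∑ p ∈ antidiagonal n, f p.1 * g p.2 := by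
  have product : (∑' n, f n) * ∑' n, g n = ∑' p : ℕ × ℕ, f p.1 * g p.2 := by
    rw [ENNReal.tsum_prod']
    simp_rw [ENNReal.tsum_mul_left, ENNReal.tsum_mul_right]
  rw [product, ← HasAntidiagonal.sigmaAntidiagonalEquivProd.tsum_eq, ENNReal.tsum_sigma']
  refine tsum_congr fun n ↦ ?_
  rw [tsum_fintype, ← sum_coe_sort (antidiagonal n)]
  rfl

variable {w : ℝ≥0∞}

theorem egfNorm_mono {Ψ Φ : CF X} (h : ∀ n, egfCoeff μ Ψ n ≤ egfCoeff μ Φ n) :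
    egfNorm μ w Ψ ≤ egfNorm μ w Φ :=
  ENNReal.tsum_le_tsum fun n ↦ mul_le_mul_right (h n) _

theorem egfNorm_conv_le [SigmaFinite μ] {Ψ Φ : CF X} (hΨ : ∀ n, Measurable (Ψ n))
    (hΦ : ∀ n, Measurable (Φ n)) :
    egfNorm μ w (conv Ψ Φ) ≤ egfNorm μ w Ψ * egfNorm μ w Φ := by
  rw [egfNorm, egfNorm, egfNorm, tsum_mul_tsum_eq_tsum_antidiagonal]
  refine ENNReal.tsum_le_tsum fun n ↦ ?_
  calc w ^ n * egfCoeff μ (conv Ψ Φ) n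
      ≤ w ^ n * ∑ p ∈ antidiagonal n, egfCoeff μ Ψ p.1 * egfCoeff μ Φ p.2 := by
        gcongr
        exact egfCoeff_conv_le hΨ hΦ n
    _ = ∑ p ∈ antidiagonal n, w ^ p.1 * egfCoeff μ Ψ p.1 * (w ^ p.2 * egfCoeff μ Φ p.2) := by
        rw [mul_sum]
        refine sum_congr rfl fun p hp ↦ ?_
        rw [← mem_antidiagonal.1 hp, pow_add]
        ring

theorem egfNorm_unit_le : egfNorm μ w (unit : CF X) ≤ 1 := by
  rw [egfNorm, tsum_eq_single 0 fun n hn ↦ by simp [egfCoeff, unit, hn]]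
  simp [egfCoeff, unit]

theorem egfNorm_starPow_le [SigmaFinite μ] {Φ : CF X} (hΦ : ∀ n, Measurable (Φ n)) (m : ℕ) :
    egfNorm μ w (starPow Φ m) ≤ egfNorm μ w Φ ^ m := by
  induction m with
  | zero => exact egfNorm_unit_le.trans_eq (pow_zero _).symm
  | succ m ih =>
    rw [starPow, pow_succ']
    exact (egfNorm_conv_le hΦ (measurable_starPow hΦ m)).trans (by gcongr)

theorem egfCoeff_add_le {Ψ Φ : CF X} {n : ℕ} (hΨ : Measurable (Ψ n)) :
    egfCoeff μ (Ψ + Φ) n ≤ egfCoeff μ Ψ n + egfCoeff μ Φ n := by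
  rw [egfCoeff, egfCoeff, egfCoeff, ← mul_add, ← lintegral_add_left hΨ.enorm]
  gcongr
  exact enorm_add_le _ _

theorem egfNorm_add_le {Ψ Φ : CF X} (hΨ : ∀ n, Measurable (Ψ n)) :
    egfNorm μ w (Ψ + Φ) ≤ egfNorm μ w Ψ + egfNorm μ w Φ := by
  rw [egfNorm, egfNorm, egfNorm, ← ENNReal.tsum_add]
  refine ENNReal.tsum_le_tsum fun n ↦ ?_
  rw [← mul_add]
  gcongr
  exact egfCoeff_add_le (hΨ n)

theorem egfNorm_neg (Φ : CF X) : egfNorm μ w (-Φ) = egfNorm μ w Φ := by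
  simp only [egfNorm, egfCoeff, Pi.neg_apply, enorm_neg]

theorem egfNorm_sub_le {Ψ Φ : CF X} (hΨ : ∀ n, Measurable (Ψ n)) :
    egfNorm μ w (Ψ - Φ) ≤ egfNorm μ w Ψ + egfNorm μ w Φ := by
  rw [sub_eq_add_neg, ← egfNorm_neg Φ]
  exact egfNorm_add_le hΨ

theorem egfNorm_smul (c : ℝ) (Φ : CF X) : egfNorm μ w (c • Φ) = ‖c‖ₑ * egfNorm μ w Φ := by
  simp only [egfNorm, egfCoeff, Pi.smul_apply, smul_eq_mul, enorm_mul,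
    lintegral_const_mul' _ _ enorm_ne_top, ← ENNReal.tsum_mul_left]
  exact tsum_congr fun n ↦ by ring

theorem egfCoeff_restrictDegrees_of_mem {s : Set ℕ} {n : ℕ} (hn : n ∈ s) (Φ : CF X) :
    egfCoeff μ (restrictDegrees s Φ) n = egfCoeff μ Φ n := by
  rw [egfCoeff, funext (restrictDegrees_of_mem hn Φ), egfCoeff]

theorem egfCoeff_restrictDegrees_of_notMem {s : Set ℕ} {n : ℕ} (hn : n ∉ s) (Φ : CF X) :
    egfCoeff μ (restrictDegrees s Φ) n = 0 := by
  simp [egfCoeff, restrictDegrees_of_notMem hn]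

theorem egfNorm_restrictDegrees_mono {s s' : Set ℕ} (h : s ⊆ s') (Φ : CF X) :
    egfNorm μ w (restrictDegrees s Φ) ≤ egfNorm μ w (restrictDegrees s' Φ) := by
  refine egfNorm_mono fun n ↦ ?_
  by_cases hn : n ∈ s
  · rw [egfCoeff_restrictDegrees_of_mem hn, egfCoeff_restrictDegrees_of_mem (h hn)]
  · rw [egfCoeff_restrictDegrees_of_notMem hn]
    exact zero_le

theorem egfNorm_restrictDegrees_le (s : Set ℕ) (Φ : CF X) :
    egfNorm μ w (restrictDegrees s Φ) ≤ egfNorm μ w Φ :=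
  (egfNorm_restrictDegrees_mono s.subset_univ Φ).trans_eq (by rw [restrictDegrees_univ])

theorem egfCoeff_sum_le {ι : Type*} (s : Finset ι) {Φ : ι → CF X} {n : ℕ}
    (hΦ : ∀ i ∈ s, Measurable (Φ i n)) :
    egfCoeff μ (fun n y ↦ ∑ i ∈ s, Φ i n y) n ≤ ∑ i ∈ s, egfCoeff μ (Φ i) n := by
  simp only [egfCoeff, ← mul_sum]
  rw [← lintegral_finsetSum _ fun i hi ↦ (hΦ i hi).enorm]
  gcongr
  exact enorm_sum_le _ _

theorem egfCoeff_starExpTail_le {Φ : CF X} (hΦ : ∀ n, Measurable (Φ n)) (j n : ℕ) :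
    egfCoeff μ (starExpTail j Φ) n ≤ ∑' i, egfCoeff μ (starPow Φ (j + i)) n := by
  have enorm_le (m : ℕ) (y : Fin n → X) :
      ‖(m ! : ℝ)⁻¹ * starPow Φ m n y‖ₑ ≤ ‖starPow Φ m n y‖ₑ := by
    rw [enorm_mul, Real.enorm_of_nonneg (by positivity)]
    refine mul_le_of_le_one_left' (ENNReal.ofReal_le_one.2 (inv_le_one_of_one_le₀ ?_))
    exact_mod_cast m.factorial_pos
  calc egfCoeff μ (starExpTail j Φ) n
      ≤ ∑ m ∈ Icc j n, egfCoeff μ (fun n y ↦ (m ! : ℝ)⁻¹ * starPow Φ m n y) n :=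
        egfCoeff_sum_le (Icc j n) fun m _ ↦ (measurable_starPow hΦ m n).const_mul _
    _ ≤ ∑ m ∈ Icc j n, egfCoeff μ (starPow Φ m) n := by
        unfold egfCoeff
        gcongr
        exact enorm_le _ _
    _ = ∑ i ∈ range (n + 1 - j), egfCoeff μ (starPow Φ (j + i)) n := by
        rw [← Ico_add_one_right_eq_Icc, sum_Ico_eq_sum_range]
    _ ≤ ∑' i, egfCoeff μ (starPow Φ (j + i)) n := ENNReal.sum_le_tsum _

theorem tsum_pow_le_two {r : ℝ≥0∞} (hr : r ≤ 2⁻¹) : ∑' n : ℕ, r ^ n ≤ 2 :=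
  (ENNReal.tsum_le_tsum fun n ↦ pow_le_pow_left' hr n).trans_eq ENNReal.tsum_geometric_two

theorem egfNorm_starExpTail_le [SigmaFinite μ] {Φ : CF X} (hΦ : ∀ n, Measurable (Φ n))
    (hN : egfNorm μ w Φ ≤ 2⁻¹) (j : ℕ) :
    egfNorm μ w (starExpTail j Φ) ≤ 2 * egfNorm μ w Φ ^ j := by
  calc egfNorm μ w (starExpTail j Φ)
      ≤ ∑' n, w ^ n * ∑' i, egfCoeff μ (starPow Φ (j + i)) n :=
        ENNReal.tsum_le_tsum fun n ↦ mul_le_mul_right (egfCoeff_starExpTail_le hΦ j n) _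
    _ = ∑' i, egfNorm μ w (starPow Φ (j + i)) := by
        simp only [← ENNReal.tsum_mul_left]
        exact ENNReal.tsum_comm
    _ ≤ ∑' i, egfNorm μ w Φ ^ j * egfNorm μ w Φ ^ i :=
        ENNReal.tsum_le_tsum fun i ↦ (egfNorm_starPow_le hΦ _).trans_eq (pow_add _ _ _)
    _ = (∑' i, egfNorm μ w Φ ^ i) * egfNorm μ w Φ ^ j := by
        rw [ENNReal.tsum_mul_left, mul_comm]
    _ ≤ 2 * egfNorm μ w Φ ^ j := by
        gcongr
        exact tsum_pow_le_two hN

theorem egfCoeff_conv_le_of_geometric [SigmaFinite μ] {Ψ Φ : CF X} (hΨ : ∀ n, Measurable (Ψ n))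
    (hΦ : ∀ n, Measurable (Φ n)) {Δ B B' : ℝ≥0∞} (hΨB : ∀ n, egfCoeff μ Ψ n ≤ Δ ^ n * B)
    (hΦB : ∀ n, egfCoeff μ Φ n ≤ Δ ^ n * B') (n : ℕ) :
    egfCoeff μ (conv Ψ Φ) n ≤ (n + 1) * (Δ ^ n * (B * B')) := by
  calc egfCoeff μ (conv Ψ Φ) n
      ≤ ∑ p ∈ antidiagonal n, egfCoeff μ Ψ p.1 * egfCoeff μ Φ p.2 := egfCoeff_conv_le hΨ hΦ n
    _ ≤ ∑ _ ∈ antidiagonal n, Δ ^ n * (B * B') := by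
        refine sum_le_sum fun p hp ↦ (mul_le_mul' (hΨB _) (hΦB _)).trans_eq ?_
        rw [← mem_antidiagonal.1 hp, pow_add]
        ring
    _ = (n + 1) * (Δ ^ n * (B * B')) := by simp

theorem egfNorm_restrictDegrees_Ici_one_le {Φ : CF X} {Δ B : ℝ≥0∞}
    (hΦ : ∀ n ≥ 1, egfCoeff μ Φ n ≤ (n + 1) * (Δ ^ n * B)) (hw : 2 * (w * Δ) ≤ 2⁻¹) :
    egfNorm μ w (restrictDegrees (Set.Ici 1) Φ) ≤ 4 * (w * Δ) * B := by
  have term_le (n : ℕ) : w ^ (n + 1) * egfCoeff μ (restrictDegrees (Set.Ici 1) Φ) (n + 1) ≤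
      2 * (w * Δ) * B * (2 * (w * Δ)) ^ n := by
    have succ_le_two_pow : ((n + 1 : ℕ) + 1 : ℝ≥0∞) ≤ 2 ^ (n + 1) := by
      exact_mod_cast Nat.succ_le_of_lt (n + 1).lt_two_pow_self
    calc w ^ (n + 1) * egfCoeff μ (restrictDegrees (Set.Ici 1) Φ) (n + 1)
        ≤ w ^ (n + 1) * (2 ^ (n + 1) * (Δ ^ (n + 1) * B)) := by
          rw [egfCoeff_restrictDegrees_of_mem (Set.mem_Ici.2 (by lia))]
          gcongr
          exact (hΦ _ (by lia)).trans (by gcongr)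
      _ = 2 * (w * Δ) * B * (2 * (w * Δ)) ^ n := by ring
  calc egfNorm μ w (restrictDegrees (Set.Ici 1) Φ)
      = ∑' n, w ^ (n + 1) * egfCoeff μ (restrictDegrees (Set.Ici 1) Φ) (n + 1) := by
        rw [egfNorm, tsum_eq_zero_add' ENNReal.summable,
          egfCoeff_restrictDegrees_of_notMem (by simp), mul_zero, zero_add]
    _ ≤ ∑' n, 2 * (w * Δ) * B * (2 * (w * Δ)) ^ n := ENNReal.tsum_le_tsum term_le
    _ ≤ 2 * (w * Δ) * B * 2 := by
        rw [ENNReal.tsum_mul_left]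
        gcongr
        exact tsum_pow_le_two hw
    _ = 4 * (w * Δ) * B := by ring

end Norm

section Bootstrap

variable {X : Type} [MeasurableSpace X] {μ : Measure X} {w : ℝ≥0∞} {f₁ f₂ t ω : CF X} {c : ℝ}

theorem IsKernelFamily.measurable_restrictDegrees_Ico (h : IsKernelFamily f₁ f₂ t c ω)
    (hf₁ : ∀ n, Measurable (f₁ n)) (hf₂ : ∀ n, Measurable (f₂ n)) (ht : ∀ n, Measurable (t n))
    (n k : ℕ) : Measurable (restrictDegrees (Set.Ico 1 n) ω k) := by
  induction n generalizing k with
  | zero =>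
    rw [funext (restrictDegrees_of_notMem (by simp) ω)]
    exact measurable_const
  | succ n ih =>
    have hF := measurable_restrictDegrees (measurable_conv hf₁ hf₂) (Set.Ici 1)
    rw [h.restrictDegrees_succ n]
    refine (measurable_restrictDegrees ht _ k).sub (measurable_restrictDegrees (fun m ↦ ?_) _ k)
    exact (((hF m).const_smul c).add (measurable_conv (measurable_starExpTail ih 1) hF m)).add
      (measurable_starExpTail ih 2 m)

theorem IsKernelFamily.egfNorm_restrictDegrees_succ_le [SigmaFinite μ]
    (h : IsKernelFamily f₁ f₂ t c ω) (hf₁ : ∀ n, Measurable (f₁ n))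
    (hf₂ : ∀ n, Measurable (f₂ n)) (ht : ∀ n, Measurable (t n)) {n : ℕ}
    (hn : egfNorm μ w (restrictDegrees (Set.Ico 1 n) ω) ≤ 2⁻¹) :
    egfNorm μ w (restrictDegrees (Set.Ico 1 (n + 1)) ω) ≤
      egfNorm μ w (restrictDegrees (Set.Ici 1) t) +
        (‖c‖ₑ * egfNorm μ w (restrictDegrees (Set.Ici 1) (conv f₁ f₂)) +
          2 * egfNorm μ w (restrictDegrees (Set.Ico 1 n) ω) *
            egfNorm μ w (restrictDegrees (Set.Ici 1) (conv f₁ f₂)) +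
          2 * egfNorm μ w (restrictDegrees (Set.Ico 1 n) ω) ^ 2) := by
  have hF := measurable_restrictDegrees (measurable_conv hf₁ hf₂) (Set.Ici 1)
  have hΩ := h.measurable_restrictDegrees_Ico hf₁ hf₂ ht n
  have hconv := measurable_conv (measurable_starExpTail hΩ 1) hF
  have hcF (m : ℕ) := (hF m).const_smul c
  rw [h.restrictDegrees_succ n]
  set Ω := restrictDegrees (Set.Ico 1 n) ω
  set F := restrictDegrees (Set.Ici 1) (conv f₁ f₂)
  calc egfNorm μ w (restrictDegrees (Set.Ico 1 (n + 1)) t -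
        restrictDegrees (Set.Ico 2 (n + 1))
          (c • F + conv (starExpTail 1 Ω) F + starExpTail 2 Ω))
      ≤ egfNorm μ w (restrictDegrees (Set.Ico 1 (n + 1)) t) +
          egfNorm μ w (restrictDegrees (Set.Ico 2 (n + 1))
            (c • F + conv (starExpTail 1 Ω) F + starExpTail 2 Ω)) :=
        egfNorm_sub_le (measurable_restrictDegrees ht _)
    _ ≤ egfNorm μ w (restrictDegrees (Set.Ici 1) t) +
          egfNorm μ w (c • F + conv (starExpTail 1 Ω) F + starExpTail 2 Ω) :=
        add_le_add (egfNorm_restrictDegrees_mono Set.Ico_subset_Ici_self t)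
          (egfNorm_restrictDegrees_le _ _)
    _ ≤ egfNorm μ w (restrictDegrees (Set.Ici 1) t) +
          (egfNorm μ w (c • F) + egfNorm μ w (conv (starExpTail 1 Ω) F) +
            egfNorm μ w (starExpTail 2 Ω)) := by
        gcongr
        exact (egfNorm_add_le fun m ↦ (hcF m).add (hconv m)).trans
          (by gcongr; exact egfNorm_add_le hcF)
    _ ≤ _ := by
        rw [egfNorm_smul]
        gcongr
        · refine (egfNorm_conv_le (measurable_starExpTail hΩ 1) hF).trans ?_
          gcongr
          simpa using egfNorm_starExpTail_le hΩ hn 1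
        · exact egfNorm_starExpTail_le hΩ hn 2

theorem IsKernelFamily.egfNorm_restrictDegrees_Ico_le [SigmaFinite μ]
    (h : IsKernelFamily f₁ f₂ t c ω) (hf₁ : ∀ n, Measurable (f₁ n))
    (hf₂ : ∀ n, Measurable (f₂ n)) (ht : ∀ n, Measurable (t n))
    (hsmall : egfNorm μ w (restrictDegrees (Set.Ici 1) t) +
      (‖c‖ₑ + 1) * egfNorm μ w (restrictDegrees (Set.Ici 1) (conv f₁ f₂)) ≤ 8⁻¹) (n : ℕ) :
    egfNorm μ w (restrictDegrees (Set.Ico 1 n) ω) ≤ 4⁻¹ := by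
  induction n with
  | zero =>
    have hempty (m : ℕ) : m ∉ Set.Ico 1 0 := by simp
    simp only [egfNorm, egfCoeff_restrictDegrees_of_notMem (hempty _), mul_zero, tsum_zero]
    exact zero_le
  | succ n ih =>
    have ih_two : 2 * egfNorm μ w (restrictDegrees (Set.Ico 1 n) ω) ≤ 2⁻¹ := by
      refine (mul_le_mul_right ih 2).trans_eq ?_
      rw [← ENNReal.toReal_eq_toReal_iff' (by finiteness) (by finiteness)]
      norm_num
    have ih_sq : 2 * egfNorm μ w (restrictDegrees (Set.Ico 1 n) ω) ^ 2 ≤ 8⁻¹ := by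
      refine (mul_le_mul_right (pow_le_pow_left' ih 2) 2).trans_eq ?_
      rw [← ENNReal.toReal_eq_toReal_iff' (by finiteness) (by finiteness)]
      norm_num
    have ih_half : egfNorm μ w (restrictDegrees (Set.Ico 1 n) ω) ≤ 2⁻¹ :=
      ih.trans (ENNReal.inv_le_inv.2 (by norm_num))
    refine (h.egfNorm_restrictDegrees_succ_le hf₁ hf₂ ht ih_half).trans ?_
    set S := egfNorm μ w (restrictDegrees (Set.Ico 1 n) ω)
    set F := egfNorm μ w (restrictDegrees (Set.Ici 1) (conv f₁ f₂))
    set T := egfNorm μ w (restrictDegrees (Set.Ici 1) t)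
    calc T + (‖c‖ₑ * F + 2 * S * F + 2 * S ^ 2)
        ≤ T + (‖c‖ₑ * F + 1 * F + 8⁻¹) := by
          gcongr
          exact ih_two.trans (by simp)
      _ = T + (‖c‖ₑ + 1) * F + 8⁻¹ := by ring
      _ ≤ 8⁻¹ + 8⁻¹ := by gcongr
      _ = 4⁻¹ := by
          rw [← two_mul, ← ENNReal.toReal_eq_toReal_iff' (by finiteness) (by finiteness)]
          norm_num

theorem IsKernelFamily.pow_mul_egfCoeff_le [SigmaFinite μ] (h : IsKernelFamily f₁ f₂ t c ω)
    (hf₁ : ∀ n, Measurable (f₁ n)) (hf₂ : ∀ n, Measurable (f₂ n)) (ht : ∀ n, Measurable (t n))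
    {Δ B T : ℝ≥0∞} (hf₁B : ∀ n, egfCoeff μ f₁ n ≤ Δ ^ n * B)
    (hf₂B : ∀ n, egfCoeff μ f₂ n ≤ Δ ^ n * B)
    (htT : ∀ n ≥ 1, egfCoeff μ t n ≤ (n + 1) * (Δ ^ n * T))
    (hw : 2 * (w * Δ) ≤ 2⁻¹) (hsmall : 4 * (w * Δ) * (T + (‖c‖ₑ + 1) * (B * B)) ≤ 8⁻¹)
    {k : ℕ} (hk : 1 ≤ k) : w ^ k * egfCoeff μ ω k ≤ 4⁻¹ := by
  have hF := egfNorm_restrictDegrees_Ici_one_le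
    (fun n _ ↦ egfCoeff_conv_le_of_geometric hf₁ hf₂ hf₁B hf₂B n) hw
  have hT := egfNorm_restrictDegrees_Ici_one_le htT hw
  have hsmall' : egfNorm μ w (restrictDegrees (Set.Ici 1) t) +
      (‖c‖ₑ + 1) * egfNorm μ w (restrictDegrees (Set.Ici 1) (conv f₁ f₂)) ≤ 8⁻¹ :=
    calc _ ≤ 4 * (w * Δ) * T + (‖c‖ₑ + 1) * (4 * (w * Δ) * (B * B)) := by gcongr
      _ = 4 * (w * Δ) * (T + (‖c‖ₑ + 1) * (B * B)) := by ring
      _ ≤ 8⁻¹ := hsmall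
  have hmem : k ∈ Set.Ico 1 (k + 1) := ⟨hk, k.lt_succ_self⟩
  calc w ^ k * egfCoeff μ ω k
      = w ^ k * egfCoeff μ (restrictDegrees (Set.Ico 1 (k + 1)) ω) k := by
        rw [egfCoeff_restrictDegrees_of_mem hmem]
    _ ≤ egfNorm μ w (restrictDegrees (Set.Ico 1 (k + 1)) ω) := ENNReal.le_tsum k
    _ ≤ 4⁻¹ := h.egfNorm_restrictDegrees_Ico_le hf₁ hf₂ ht hsmall' (k + 1)

end Bootstrap

section GeometricBounds

variable {X : Type} [MeasurableSpace X] {μ : Measure X}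

theorem egfCoeff_div_le {Φ : CF X} {n : ℕ} {p b : ℝ} (hp : 0 < p)
    (hΦ : ∫⁻ y, ENNReal.ofReal |Φ n y| ∂(Measure.pi fun _ ↦ μ) ≤ ENNReal.ofReal (n ! * b * p)) :
    egfCoeff μ (fun n y ↦ Φ n y / p) n ≤ ENNReal.ofReal b := by
  rw [egfCoeff_le_iff]
  calc ∫⁻ y, ‖Φ n y / p‖ₑ ∂(Measure.pi fun _ ↦ μ)
      = (∫⁻ y, ENNReal.ofReal |Φ n y| ∂Measure.pi fun _ ↦ μ) * ENNReal.ofReal p⁻¹ := by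
        rw [← lintegral_mul_const' _ _ ENNReal.ofReal_ne_top]
        simp only [div_eq_mul_inv, enorm_mul, Real.enorm_eq_ofReal_abs, abs_inv, abs_of_pos hp]
    _ ≤ ENNReal.ofReal (n ! * b * p) * ENNReal.ofReal p⁻¹ := by gcongr
    _ = n ! * ENNReal.ofReal b := by
        rw [← ENNReal.ofReal_mul' (by positivity), mul_inv_cancel_right₀ hp.ne',
          ENNReal.ofReal_mul (by positivity), ENNReal.ofReal_natCast]

theorem egfCoeff_div_le_of_geometric {Φ : CF X} {p b δ : ℝ} (hp : 0 < p) (hb : 0 ≤ b)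
    (hδ : 0 ≤ δ) (hΦ_zero : ∀ y, Φ 0 y = p)
    (hΦ : ∀ n ≥ 1, ∫⁻ y, ENNReal.ofReal |Φ n y| ∂(Measure.pi fun _ ↦ μ) ≤
      ENNReal.ofReal (n ! * b * δ ^ n * p)) (n : ℕ) :
    egfCoeff μ (fun n y ↦ Φ n y / p) n ≤ ENNReal.ofReal δ ^ n * ENNReal.ofReal (1 + b) := by
  rw [← ENNReal.ofReal_pow hδ, ← ENNReal.ofReal_mul (by positivity)]
  refine egfCoeff_div_le hp ?_
  rcases n.eq_zero_or_pos with rfl | hn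
  · simp only [hΦ_zero, lintegral_const, abs_of_pos hp, Measure.pi_empty_univ, mul_one,
      Nat.factorial_zero, Nat.cast_one, pow_zero, one_mul]
    exact ENNReal.ofReal_le_ofReal (by nlinarith)
  · refine (hΦ n hn).trans (ENNReal.ofReal_le_ofReal ?_)
    calc n ! * b * δ ^ n * p ≤ n ! * (1 + b) * δ ^ n * p := by gcongr; linarith
      _ = n ! * (δ ^ n * (1 + b)) * p := by ring

theorem egfCoeff_div_le_succ_mul {Φ : CF X} {n : ℕ} {p q a b δ : ℝ} (hp : 0 < p) (hb : 0 ≤ b)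
    (hδ : 0 ≤ δ) (hqp : q ≤ a * p)
    (hΦ : ∫⁻ y, ENNReal.ofReal |Φ n y| ∂(Measure.pi fun _ ↦ μ) ≤
      ENNReal.ofReal ((n + 1)! * b * δ ^ n * q)) :
    egfCoeff μ (fun n y ↦ Φ n y / p) n ≤
      (n + 1) * (ENNReal.ofReal δ ^ n * ENNReal.ofReal (b * a)) := by
  have hcast : (n + 1 : ℝ≥0∞) = ENNReal.ofReal (n + 1) := by
    exact_mod_cast (ENNReal.ofReal_natCast (n + 1)).symm
  rw [hcast, ← ENNReal.ofReal_pow hδ, ← ENNReal.ofReal_mul (by positivity),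
    ← ENNReal.ofReal_mul (by positivity)]
  refine egfCoeff_div_le hp (hΦ.trans (ENNReal.ofReal_le_ofReal ?_))
  calc (n + 1)! * b * δ ^ n * q ≤ (n + 1)! * b * δ ^ n * (a * p) := by gcongr
    _ = n ! * ((n + 1) * (δ ^ n * (b * a))) * p := by
      rw [Nat.factorial_succ]
      push_cast
      ring

end GeometricBounds

section KernelBound

/-- The growth rate `χ` of a kernel family with `|c| ≤ γ`, whose one-point functionals have
exponential coefficients at most `b δ ^ n` and whose two-point functional has coefficients at
most `(n + 1) τ δ ^ n`. The factor `32` makes the bootstrap close at the weight `(χ δ)⁻¹`. -/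
def kernelGrowthRate (b τ γ : ℝ) : ℝ := 32 * (τ + (γ + 1) * b ^ 2)

theorem le_kernelGrowthRate {b τ γ : ℝ} (hb : 1 ≤ b) (hτ : 0 ≤ τ) (hγ : 0 ≤ γ) :
    32 ≤ kernelGrowthRate b τ γ := by
  have hb_sq : 1 ≤ b ^ 2 := one_le_pow₀ hb
  unfold kernelGrowthRate
  nlinarith

theorem kernelGrowthRate_pos {b τ γ : ℝ} (hb : 1 ≤ b) (hτ : 0 ≤ τ) (hγ : 0 ≤ γ) :
    0 < kernelGrowthRate b τ γ :=
  lt_of_lt_of_le (by norm_num) (le_kernelGrowthRate hb hτ hγ)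

variable {X : Type} [MeasurableSpace X] {μ : Measure X} {f₁ f₂ t ω : CF X} {c b τ γ δ : ℝ}

theorem four_mul_inv_kernelGrowthRate_mul_le (hb : 1 ≤ b) (hτ : 0 ≤ τ) (hc : |c| ≤ γ) :
    4 * ENNReal.ofReal (kernelGrowthRate b τ γ)⁻¹ *
      (ENNReal.ofReal τ + (‖c‖ₑ + 1) * (ENNReal.ofReal b * ENNReal.ofReal b)) ≤ 8⁻¹ := by
  have hγ : 0 ≤ γ := (abs_nonneg c).trans hc
  have hχ_pos : 0 < kernelGrowthRate b τ γ := kernelGrowthRate_pos hb hτ hγ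
  rw [Real.enorm_eq_ofReal_abs]
  calc 4 * ENNReal.ofReal (kernelGrowthRate b τ γ)⁻¹ *
        (ENNReal.ofReal τ + (ENNReal.ofReal |c| + 1) * (ENNReal.ofReal b * ENNReal.ofReal b))
      ≤ ENNReal.ofReal 4 * ENNReal.ofReal (kernelGrowthRate b τ γ)⁻¹ * (ENNReal.ofReal τ +
          (ENNReal.ofReal γ + ENNReal.ofReal 1) * (ENNReal.ofReal b * ENNReal.ofReal b)) := by
        rw [ENNReal.ofReal_ofNat, ENNReal.ofReal_one]
        gcongr
    _ = ENNReal.ofReal (4 * (kernelGrowthRate b τ γ)⁻¹ * (τ + (γ + 1) * (b * b))) := by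
        rw [← ENNReal.ofReal_add hγ zero_le_one, ← ENNReal.ofReal_mul (by positivity),
          ← ENNReal.ofReal_mul (by positivity), ← ENNReal.ofReal_mul (by positivity),
          ← ENNReal.ofReal_add hτ (by positivity), ← ENNReal.ofReal_mul (by positivity)]
    _ = ENNReal.ofReal 8⁻¹ := by
        congr 1
        rw [mul_right_comm, mul_inv_eq_iff_eq_mul₀ hχ_pos.ne', kernelGrowthRate]
        ring
    _ = 8⁻¹ := by rw [ENNReal.ofReal_inv_of_pos (by norm_num), ENNReal.ofReal_ofNat]

theorem two_mul_inv_kernelGrowthRate_le (hb : 1 ≤ b) (hτ : 0 ≤ τ) (hγ : 0 ≤ γ) :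
    2 * ENNReal.ofReal (kernelGrowthRate b τ γ)⁻¹ ≤ 2⁻¹ := by
  have hχ : 4 ≤ kernelGrowthRate b τ γ := by linarith [le_kernelGrowthRate hb hτ hγ]
  rw [← ENNReal.ofReal_ofNat 2, ← ENNReal.ofReal_inv_of_pos two_pos,
    ← ENNReal.ofReal_mul zero_le_two]
  refine ENNReal.ofReal_le_ofReal ?_
  rw [mul_inv_le_iff₀ (by linarith)]
  linarith

theorem IsKernelFamily.egfCoeff_le [SigmaFinite μ] (h : IsKernelFamily f₁ f₂ t c ω)
    (hf₁ : ∀ n, Measurable (f₁ n)) (hf₂ : ∀ n, Measurable (f₂ n)) (ht : ∀ n, Measurable (t n))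
    (hb : 1 ≤ b) (hτ : 0 ≤ τ) (hc : |c| ≤ γ) (hδ : 0 < δ)
    (hf₁b : ∀ n, egfCoeff μ f₁ n ≤ ENNReal.ofReal δ ^ n * ENNReal.ofReal b)
    (hf₂b : ∀ n, egfCoeff μ f₂ n ≤ ENNReal.ofReal δ ^ n * ENNReal.ofReal b)
    (htτ : ∀ n ≥ 1, egfCoeff μ t n ≤ (n + 1) * (ENNReal.ofReal δ ^ n * ENNReal.ofReal τ))
    {k : ℕ} (hk : 1 ≤ k) :
    egfCoeff μ ω k ≤ ENNReal.ofReal (kernelGrowthRate b τ γ * δ) ^ k * 4⁻¹ := by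
  have hγ : 0 ≤ γ := (abs_nonneg c).trans hc
  have hχ_pos : 0 < kernelGrowthRate b τ γ := kernelGrowthRate_pos hb hτ hγ
  have hχδ_pos : 0 < ENNReal.ofReal (kernelGrowthRate b τ γ * δ) :=
    ENNReal.ofReal_pos.2 (mul_pos hχ_pos hδ)
  have weight_mul_rate : (ENNReal.ofReal (kernelGrowthRate b τ γ * δ))⁻¹ * ENNReal.ofReal δ =
      ENNReal.ofReal (kernelGrowthRate b τ γ)⁻¹ := by
    rw [← ENNReal.ofReal_inv_of_pos (mul_pos hχ_pos hδ), ← ENNReal.ofReal_mul (by positivity),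
      mul_inv, inv_mul_cancel_right₀ hδ.ne']
  have weighted := h.pow_mul_egfCoeff_le hf₁ hf₂ ht hf₁b hf₂b htτ
    (weight_mul_rate ▸ two_mul_inv_kernelGrowthRate_le hb hτ hγ)
    (weight_mul_rate ▸ four_mul_inv_kernelGrowthRate_mul_le hb hτ hc) hk
  rwa [← ENNReal.inv_pow, ENNReal.inv_mul_le_iff (pow_ne_zero k hχδ_pos.ne') (by finiteness)]
    at weighted

theorem lintegral_abs_le_of_egfCoeff_le {Φ : CF X} {n : ℕ} {δ χ : ℝ} (hδ : 0 ≤ δ) (hχ : 0 ≤ χ)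
    (hΦ : egfCoeff μ Φ n ≤ ENNReal.ofReal (χ * δ) ^ n * 4⁻¹) :
    ∫⁻ y, ENNReal.ofReal |Φ n y| ∂(Measure.pi fun _ ↦ μ) ≤
      ENNReal.ofReal (n ! * 4⁻¹ * δ ^ n * χ ^ n) := by
  simp only [egfCoeff_le_iff, Real.enorm_eq_ofReal_abs] at hΦ
  refine hΦ.trans_eq ?_
  rw [← ENNReal.ofReal_natCast, ← ENNReal.ofReal_ofNat 4, ← ENNReal.ofReal_inv_of_pos four_pos,
    ← ENNReal.ofReal_pow (by positivity), ← ENNReal.ofReal_mul (by positivity),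
    ← ENNReal.ofReal_mul (by positivity)]
  congr 1
  ring

end KernelBound

end CF

theorem abs_div_add_le_one_add {K : Type*} [Field K] [LinearOrder K]
    [IsStrictOrderedRing K] {a b q : K} (hb : 0 ≤ b) (hpos : 0 < a + b)
    (hq : b ≤ q * (a + b)) : |a / (a + b)| ≤ 1 + q := by
  have hratio_le : b / (a + b) ≤ q := (div_le_iff₀ hpos).2 hq
  have hratio_nonneg : 0 ≤ b / (a + b) := div_nonneg hb hpos.le
  have hcompl : a / (a + b) = 1 - b / (a + b) := by field_simp; ring
  rw [hcompl, abs_le]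
  constructor <;> linarith

open CF in
open scoped Nat in
theorem twoPoint_kernel_integral_bound_general {X : Type} [MeasurableSpace X] {μ : Measure X}
    [SigmaFinite μ] {M A d₀ δ : ℝ} (hM : 0 < M) (hA : 0 < A) (hd₀ : 0 < d₀) (hδ : 0 < δ)
    {ρ1 : X → ℝ} {ρ2 : X → X → ℝ} {ρT : CF X} {ω : X → X → CF X}
    (hρ1_pos : ∀ x, 0 < ρ1 x) (hρT_meas : ∀ n, Measurable (ρT n))
    (hρT_one : ∀ x, ρT 1 ![x] = ρ1 x)
    (hρ2 : ∀ x₁ x₂, ρ2 x₁ x₂ = ρT 2 ![x₁, x₂] + ρ1 x₁ * ρ1 x₂)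
    (hB₁ : ∀ k ≥ 1, ∀ x, ∫⁻ y, ENNReal.ofReal |D x ρT k y| ∂(Measure.pi fun _ ↦ μ) ≤
      ENNReal.ofReal (k ! * M * A * δ ^ k * ρ1 x))
    (hB₂ : ∀ k ≥ 1, ∀ x₁ x₂, ∫⁻ y, ENNReal.ofReal |D2 x₂ x₁ ρT k y| ∂(Measure.pi fun _ ↦ μ) ≤
      ENNReal.ofReal ((k + 1)! * M * A ^ 2 * δ ^ k * (ρ1 x₁ * ρ1 x₂)))
    (hC : ∀ x₁ x₂, ρ1 x₁ * ρ1 x₂ ≤ d₀ * ρ2 x₁ x₂)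
    (hω : ∀ x₁ x₂, IsKernelFamily (fun n y ↦ D x₁ ρT n y / ρ1 x₁)
      (fun n y ↦ D x₂ ρT n y / ρ1 x₂) (fun n y ↦ D2 x₂ x₁ ρT n y / ρ2 x₁ x₂)
      (ρT 2 ![x₁, x₂] / ρ2 x₁ x₂) (ω x₁ x₂))
    {k : ℕ} (hk : 1 ≤ k) (x₁ x₂ : X) :
    ∫⁻ y, ENNReal.ofReal |ω x₁ x₂ k y| ∂(Measure.pi fun _ ↦ μ) ≤
      ENNReal.ofReal (k ! * 4⁻¹ * δ ^ k *
        kernelGrowthRate (1 + M * A) (M * A ^ 2 * d₀) (1 + d₀) ^ k) := by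
  have hρ2_pos : 0 < ρ2 x₁ x₂ :=
    pos_of_mul_pos_right ((mul_pos (hρ1_pos x₁) (hρ1_pos x₂)).trans_le (hC x₁ x₂)) hd₀.le
  have hb : 1 ≤ 1 + M * A := le_add_of_nonneg_right (mul_pos hM hA).le
  have hτ : 0 ≤ M * A ^ 2 * d₀ := by positivity
  have hχ_pos : 0 < kernelGrowthRate (1 + M * A) (M * A ^ 2 * d₀) (1 + d₀) :=
    kernelGrowthRate_pos hb hτ (by positivity)
  have measurable_D_div (x : X) (n : ℕ) : Measurable fun y ↦ D x ρT n y / ρ1 x :=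
    (measurable_D hρT_meas x n).div_const _
  have measurable_D2_div (n : ℕ) : Measurable fun y ↦ D2 x₂ x₁ ρT n y / ρ2 x₁ x₂ :=
    (measurable_D (measurable_D hρT_meas x₁) x₂ n).div_const _
  have one_point_le (x : X) (n : ℕ) : egfCoeff μ (fun n y ↦ D x ρT n y / ρ1 x) n ≤
      ENNReal.ofReal δ ^ n * ENNReal.ofReal (1 + M * A) :=
    egfCoeff_div_le_of_geometric (hρ1_pos x) (by positivity) hδ.le
      (fun y ↦ by rw [← hρT_one, D]; congr; subsingleton)
      (fun n hn ↦ by simpa only [mul_assoc] using hB₁ n hn x) n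
  have two_point_le (n : ℕ) (hn : n ≥ 1) : egfCoeff μ (fun n y ↦ D2 x₂ x₁ ρT n y / ρ2 x₁ x₂) n ≤
      (n + 1) * (ENNReal.ofReal δ ^ n * ENNReal.ofReal (M * A ^ 2 * d₀)) :=
    egfCoeff_div_le_succ_mul hρ2_pos (by positivity) hδ.le (hC x₁ x₂)
      (by simpa only [mul_assoc] using hB₂ n hn x₁ x₂)
  have ratio_le : |ρT 2 ![x₁, x₂] / ρ2 x₁ x₂| ≤ 1 + d₀ := by
    rw [hρ2] at hρ2_pos ⊢
    exact abs_div_add_le_one_add (mul_pos (hρ1_pos x₁) (hρ1_pos x₂)).le hρ2_pos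
      (hρ2 x₁ x₂ ▸ hC x₁ x₂)
  exact lintegral_abs_le_of_egfCoeff_le hδ.le hχ_pos.le <|
    (hω x₁ x₂).egfCoeff_le (measurable_D_div x₁) (measurable_D_div x₂) measurable_D2_div hb hτ
      ratio_le hδ (one_point_le x₁) (one_point_le x₂) two_point_le hk

open CF MeasureTheory in
/-- Proposition 3.4: integral bounds for the two-point kernels
`ω^{(k)}(x₁,x₂;·)`, with constants depending only on `M`, `A` and `d₀`. -/
theorem twoPoint_kernel_integral_bound (d : ℕ) (hd : 1 ≤ d)
    (M A d₀ : ℝ) (hM : 0 < M) (hA : 0 < A) (hd₀ : 0 < d₀) :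
    ∃ C > (0 : ℝ), ∃ χ > (0 : ℝ),
      ∀ (Dρ : ℝ), 0 < Dρ →
      ∀ (ρ1 : Euc d → ℝ) (ρ2 : Euc d → Euc d → ℝ) (ρT : CF (Euc d))
        (ω : Euc d → Euc d → CF (Euc d)),
        (∀ x, 0 < ρ1 x) → Measurable ρ1 →
        IsSymm ρT → (∀ n, Measurable (ρT n)) →
        (∀ x, ρT 1 ![x] = ρ1 x) →
        (∀ x₁ x₂, ρ2 x₁ x₂ = ρT 2 ![x₁, x₂] + ρ1 x₁ * ρ1 x₂) →
        -- Assumption B for m = 1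
        (∀ Λ : Set (Euc d), Bornology.IsBounded Λ → MeasurableSet Λ →
          ∀ (k : ℕ), 1 ≤ k → ∀ x : Euc d,
            ∫⁻ y, ENNReal.ofReal |ρT (k + 1) (Fin.cons x y)| ∂(piRestrict d Λ k) ≤
              ENNReal.ofReal (k.factorial * M * A * Dρ ^ k * ρ1 x)) →
        -- Assumption B for m = 2
        (∀ Λ : Set (Euc d), Bornology.IsBounded Λ → MeasurableSet Λ →
          ∀ (k : ℕ), 1 ≤ k → ∀ x₁ x₂ : Euc d,
            ∫⁻ y, ENNReal.ofReal |ρT (k + 2) (Fin.cons x₁ (Fin.cons x₂ y))|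
                ∂(piRestrict d Λ k) ≤
              ENNReal.ofReal ((k + 1).factorial * M * A ^ 2 * Dρ ^ k *
                (ρ1 x₁ * ρ1 x₂))) →
        -- Assumption C
        (∀ x₁ x₂, ρ1 x₁ * ρ1 x₂ ≤ d₀ * ρ2 x₁ x₂) →
        -- the recursion defining the kernels, base case
        (∀ (x₁ x₂ : Euc d) (y : Fin 1 → Euc d),
          ω x₁ x₂ 1 y = ρT 3 (Fin.cons x₁ (Fin.cons x₂ y)) / ρ2 x₁ x₂) →
        -- the recursion defining the kernels, step
        (∀ (x₁ x₂ : Euc d) (k : ℕ), 2 ≤ k → ∀ y : Fin k → Euc d,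
          ω x₁ x₂ k y =
            ρT (k + 2) (Fin.cons x₁ (Fin.cons x₂ y)) / ρ2 x₁ x₂
            - (ρT 2 ![x₁, x₂] / ρ2 x₁ x₂) *
                ∑ σ ∈ (Finset.univ : Finset (Finset (Fin k) × Finset (Fin k))).filter
                    (fun σ => Disjoint σ.1 σ.2 ∧ σ.1 ∪ σ.2 = Finset.univ),
                  (ρT (σ.1.card + 1) (Fin.cons x₁ (sub y σ.1)) / ρ1 x₁) *
                    (ρT (σ.2.card + 1) (Fin.cons x₂ (sub y σ.2)) / ρ1 x₂)
            - ∑ σ ∈ (Finset.univ :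
                  Finset (Finset (Fin k) × Finset (Fin k) × Finset (Fin k))).filter
                  (fun σ => Disjoint σ.1 σ.2.1 ∧ Disjoint σ.1 σ.2.2 ∧
                    Disjoint σ.2.1 σ.2.2 ∧ σ.1 ∪ σ.2.1 ∪ σ.2.2 = Finset.univ ∧
                    0 < σ.2.2.card ∧ σ.2.2.card < k),
                (ρT (σ.1.card + 1) (Fin.cons x₁ (sub y σ.1)) / ρ1 x₁) *
                  (ρT (σ.2.1.card + 1) (Fin.cons x₂ (sub y σ.2.1)) / ρ1 x₂) *
                  ∑ l ∈ Finset.Icc 1 σ.2.2.card, ((l.factorial : ℝ))⁻¹ *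
                    ∑ π ∈ ordPartsOf l σ.2.2,
                      ∏ i : Fin l, ω x₁ x₂ (π i).card (sub y (π i))
            - ∑ l ∈ Finset.Icc 2 k, ((l.factorial : ℝ))⁻¹ *
                ∑ π ∈ ordPartsOf l (Finset.univ : Finset (Fin k)),
                  ∏ i : Fin l, ω x₁ x₂ (π i).card (sub y (π i))) →
        -- conclusion: the uniform integral bound
        ∀ Λ : Set (Euc d), Bornology.IsBounded Λ → MeasurableSet Λ →
        ∀ (k : ℕ), 1 ≤ k → ∀ x₁ x₂ : Euc d,
          ∫⁻ y, ENNReal.ofReal |ω x₁ x₂ k y| ∂(piRestrict d Λ k) ≤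
            ENNReal.ofReal (k.factorial * C * Dρ ^ k * χ ^ k) := by
  refine ⟨4⁻¹, by norm_num, kernelGrowthRate (1 + M * A) (M * A ^ 2 * d₀) (1 + d₀),
    kernelGrowthRate_pos (le_add_of_nonneg_right (by positivity)) (by positivity) (by positivity),
    fun Dρ hDρ ρ1 ρ2 ρT ω hρ1_pos _ _ hρT_meas hρT_one hρ2 hB₁ hB₂ hC base step Λ hΛ_bdd hΛ_meas
      k hk x₁ x₂ ↦ ?_⟩
  exact twoPoint_kernel_integral_bound_general hM hA hd₀ hDρ hρ1_pos hρT_meas hρT_one hρ2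
    (hB₁ Λ hΛ_bdd hΛ_meas) (hB₂ Λ hΛ_bdd hΛ_meas) hC
    (fun x₁ x₂ ↦ ⟨base x₁ x₂, step x₁ x₂⟩) hk x₁ x₂
end

section
/- (Generating-function bound for the majorant recursion, core of the proof of Proposition 3.4.) Let M, A, D, d₀ > 0. Define sequences a₀ = 1, a_k = k!·M·A·D^k for k ≥ 1; c_k = d₀·M·A²·(k+1)!·D^k for k ≥ 0 (so c₀ = d₀MA²); and (w_k)_{k≥1} by w₁ = c₁ + 2c₀a₁ and, for k ≥ 2, w_k = c_k + B_k(w₁,…,w_{k−1},0) + c₀ Σ_{l=0}^{k} C(k,l) a_l a_{k−l} + Σ_{l=1}^{k−1} C(k,l) B_l(w₁,…,w_l) Σ_{m=0}^{k−l} C(k−l,m) a_m a_{k−l−m}, where C(k,l) is the binomial coefficient. Then there exist constants C > 0 and χ > 0, depending only on M, A and d₀ (and not on D), such that w_k ≤ C · k! · D^k · χ^k for all k ≥ 1. -/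
open MeasureTheory Finset

/-- The `k`-th exponential Bell polynomial `B_k(t₁,…,t_k)`, as a sum over set
partitions of `{1,…,k}` into nonempty blocks (with `B₀ = 1`). -/
noncomputable def bell (t : ℕ → ℝ) (k : ℕ) : ℝ :=
  ∑ P ∈ CF.setPartitions k, ∏ B ∈ P, t B.card

/-!
Let `U_n`, `S_n`, `H_n` be the partial sums over `1 ≤ k ≤ n` of the exponential generating functions
of `w`, of its Bell polynomials `B_k(w)` and of the binomial convolution `a ∗ a`, all at the point
`x / D`. Splitting a partition at the block of a fixed point expresses `B_k(w)` through the products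
`(k-1 choose l-1) w_l B_{k-l}(w)`, and the crude bound `(k-1 choose l-1) ≤ (k choose l)` turns this
into a convolution inequality, so that `S_n ≤ U_n + U_n S_n`. The same convolution bounds the Bell
term of the recursion, whence `U_{n+1} ≤ R_{n+1} + U_n S_n + S_n H_n`, where `R_n` is the partial
sum for `c + c_0 (a ∗ a)`. In the scaled variable `x` the data do not involve `D`, and for small `x`
both `R_n` and `H_n` are at most `1 / 8`. Then `U_n ≤ 1 / 4` yields `S_n ≤ 1 / 3` and propagates:
`1 / 8 + 1 / 4 * 1 / 3 + 1 / 3 * 1 / 8 = 1 / 4`.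
-/

section PartitionSum

variable {α R : Type*} [DecidableEq α] [CommSemiring R]

/-- The total weight of all partitions of the finite set `s`, where a partition is weighted by the
product of the weights `f B` of its blocks `B`. -/
def partitionSum (f : Finset α → R) (s : Finset α) : R :=
  ∑ P : Finpartition s, ∏ B ∈ P.parts, f B

theorem partitionSum_empty (f : Finset α → R) : partitionSum f ∅ = 1 := by
  have parts_eq (P : Finpartition (∅ : Finset α)) : P.parts = ∅ := P.parts_eq_empty_iff.2 rfl
  have : Unique (Finpartition (∅ : Finset α)) := inferInstanceAs (Unique (Finpartition ⊥))
  simp [partitionSum, parts_eq]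

theorem exists_finpartition_sdiff_insert_parts_eq {s B : Finset α} (P : Finpartition s)
    (hB : B ∈ P.parts) : ∃ Q : Finpartition (s \ B), insert B Q.parts = P.parts := by
  have sup_erase : (P.parts.erase B).sup id = s \ B := by
    ext x
    simp only [mem_sup, mem_erase, id_eq, mem_sdiff]
    constructor
    · rintro ⟨C, ⟨hCB, hC⟩, hxC⟩
      exact ⟨P.le hC hxC, fun hxB ↦ hCB (P.eq_of_mem_parts hC hB hxC hxB)⟩
    · rintro ⟨hxs, hxB⟩
      obtain ⟨C, hC, hxC⟩ := P.exists_mem hxs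
      exact ⟨C, ⟨fun hCB ↦ hxB (hCB ▸ hxC), hC⟩, hxC⟩
  exact ⟨P.ofSubset (erase_subset B P.parts) sup_erase, insert_erase hB⟩

theorem sum_finpartition_part_eq (f : Finset α → R) {s B : Finset α} {a : α}
    (hBs : B ⊆ s) (haB : a ∈ B) :
    ∑ P : Finpartition s with P.part a = B, ∏ C ∈ P.parts, f C =
      f B * partitionSum f (s \ B) := by
  have B_notMem (Q : Finpartition (s \ B)) : B ∉ Q.parts := fun hB ↦
    (mem_sdiff.1 (Q.le hB haB)).2 haB
  let adjoin (Q : Finpartition (s \ B)) : Finpartition s :=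
    Q.extend (ne_empty_of_mem haB) sdiff_disjoint (sdiff_union_of_subset hBs)
  rw [partitionSum, mul_sum]
  refine (sum_bij (fun Q _ ↦ adjoin Q) ?_ ?_ ?_ ?_).symm
  · exact fun Q _ ↦ mem_filter.2
      ⟨mem_univ _, (adjoin Q).part_eq_of_mem (mem_insert_self B Q.parts) haB⟩
  · intro Q _ Q' _ h
    have parts_eq : insert B Q.parts = insert B Q'.parts := congrArg Finpartition.parts h
    refine Finpartition.ext ?_
    rw [← erase_insert (B_notMem Q), parts_eq, erase_insert (B_notMem Q')]
  · intro P hP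
    have hB : B ∈ P.parts := (mem_filter.1 hP).2 ▸ P.part_mem.2 (hBs haB)
    obtain ⟨Q, hQ⟩ := exists_finpartition_sdiff_insert_parts_eq P hB
    exact ⟨Q, mem_univ Q, Finpartition.ext hQ⟩
  · exact fun Q _ ↦ (prod_insert (B_notMem Q)).symm

theorem partitionSum_insert (f : Finset α → R) {s : Finset α} {a : α} (ha : a ∉ s) :
    partitionSum f (insert a s) =
      ∑ B ∈ s.powerset, f (insert a B) * partitionSum f (s \ B) := by
  have part_erase_mem (P : Finpartition (insert a s)) : (P.part a).erase a ∈ s.powerset :=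
    mem_powerset.2 (subset_insert_iff.1 (P.part_subset a))
  rw [partitionSum, ← sum_fiberwise_of_maps_to fun P _ ↦ part_erase_mem P]
  refine sum_congr rfl fun B hB ↦ ?_
  have hBs : B ⊆ s := mem_powerset.1 hB
  have haB : a ∉ B := fun h ↦ ha (hBs h)
  have part_erase_eq_iff (P : Finpartition (insert a s)) :
      (P.part a).erase a = B ↔ P.part a = insert a B :=
    erase_eq_iff_eq_insert (P.mem_part (mem_insert_self a s)) haB
  rw [filter_congr fun P _ ↦ part_erase_eq_iff P,
    sum_finpartition_part_eq f (insert_subset_insert a hBs) (mem_insert_self a B),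
    insert_sdiff_insert, sdiff_insert_of_notMem ha]

theorem partitionSum_map {β : Type*} [DecidableEq β] (e : α ↪ β) (f : Finset β → R)
    (s : Finset α) : partitionSum f (s.map e) = partitionSum (fun B ↦ f (B.map e)) s := by
  induction s using Finset.strongInduction with
  | _ s ih =>
    obtain rfl | ⟨a, ha⟩ := s.eq_empty_or_nonempty
    · rw [map_empty, partitionSum_empty, partitionSum_empty]
    obtain ⟨r, har, rfl⟩ : ∃ r, a ∉ r ∧ insert a r = s :=
      ⟨s.erase a, notMem_erase a s, insert_erase ha⟩
    have powerset_map : (r.map e).powerset = r.powerset.map (mapEmbedding e).toEmbedding := by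
      ext C
      simp [subset_map_iff, eq_comm]
    rw [map_insert, partitionSum_insert f (by simpa using har), partitionSum_insert _ har,
      powerset_map, sum_map]
    refine sum_congr rfl fun B _ ↦ ?_
    have sdiff_ssubset : r \ B ⊂ insert a r :=
      (sdiff_subset).trans_ssubset (ssubset_insert har)
    simp only [RelEmbedding.coe_toEmbedding, mapEmbedding_apply, ← map_insert, ← Finset.map_sdiff,
      ih _ sdiff_ssubset]

end PartitionSum

section Bell

variable {t t' : ℕ → ℝ} {k : ℕ}

theorem setPartitions_eq_image_parts (k : ℕ) :
    CF.setPartitions k = univ.image (Finpartition.parts (a := (univ : Finset (Fin k)))) := by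
  ext P
  simp only [CF.setPartitions, mem_filter, mem_univ, true_and, mem_image]
  constructor
  · rintro ⟨nonempty, disjoint, cover⟩
    refine ⟨.ofExistsUnique P (fun B _ ↦ subset_univ B) (fun a _ ↦ ?_)
      (fun h ↦ not_nonempty_empty (nonempty ∅ h)), rfl⟩
    obtain ⟨B, hB, haB⟩ := cover a
    refine ⟨B, ⟨hB, haB⟩, fun C hC ↦ by_contra fun hCB ↦ ?_⟩
    exact disjoint_left.1 (disjoint C hC.1 B hB hCB) hC.2 haB
  · rintro ⟨Q, rfl⟩
    exact ⟨fun B ↦ Q.nonempty_of_mem_parts, fun B hB C hC ↦ Q.disjoint hB hC,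
      fun a ↦ Q.exists_mem (mem_univ a)⟩

theorem bell_eq_partitionSum_univ (t : ℕ → ℝ) (k : ℕ) :
    bell t k = partitionSum (fun B ↦ t #B) (univ : Finset (Fin k)) := by
  rw [bell, setPartitions_eq_image_parts, sum_image fun _ _ _ _ ↦ Finpartition.ext, partitionSum]

theorem partitionSum_card_eq_bell {α : Type*} [DecidableEq α] (t : ℕ → ℝ) (s : Finset α) :
    partitionSum (fun B ↦ t #B) s = bell t #s := by
  have map_univ : univ.map (s.equivFin.symm.toEmbedding.trans (.subtype _)) = s := by
    ext a
    simp [← map_map]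
  rw [← congrArg (partitionSum _) map_univ, partitionSum_map, bell_eq_partitionSum_univ]
  simp only [card_map]

theorem bell_zero (t : ℕ → ℝ) : bell t 0 = 1 :=
  (partitionSum_card_eq_bell t (∅ : Finset ℕ)).symm.trans (partitionSum_empty _)

theorem bell_succ (t : ℕ → ℝ) (n : ℕ) :
    bell t (n + 1) = ∑ j ∈ range (n + 1), n.choose j * (t (j + 1) * bell t (n - j)) := by
  have summand_eq : ∀ B ∈ (range n).powerset,
      t #(insert n B) * partitionSum (fun C ↦ t #C) (range n \ B) =
        t (#B + 1) * bell t (n - #B) := by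
    intro B hB
    have hBn : B ⊆ range n := mem_powerset.1 hB
    have n_notMem : n ∉ B := fun h ↦ notMem_range_self (hBn h)
    rw [card_insert_of_notMem n_notMem, partitionSum_card_eq_bell, card_sdiff_of_subset hBn,
      card_range]
  calc bell t (n + 1) = partitionSum (fun B ↦ t #B) (insert n (range n)) := by
        rw [← range_add_one, partitionSum_card_eq_bell, card_range]
    _ = ∑ B ∈ (range n).powerset, t (#B + 1) * bell t (n - #B) := by
        rw [partitionSum_insert _ notMem_range_self, sum_congr rfl summand_eq]
    _ = ∑ j ∈ range (n + 1), n.choose j * (t (j + 1) * bell t (n - j)) := by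
        simp only [sum_powerset_apply_card fun j ↦ t (j + 1) * bell t (n - j), card_range,
          nsmul_eq_mul]

theorem card_mem_Icc_of_mem_parts {α : Type*} [DecidableEq α] {s B : Finset α}
    {P : Finpartition s} (hB : B ∈ P.parts) : #B ∈ Icc 1 #s :=
  mem_Icc.2 ⟨card_pos.2 (P.nonempty_of_mem_parts hB), card_le_card (P.le hB)⟩

theorem bell_nonneg (ht : ∀ j ∈ Icc 1 k, 0 ≤ t j) : 0 ≤ bell t k := by
  rw [bell_eq_partitionSum_univ]
  refine sum_nonneg fun P _ ↦ prod_nonneg fun B hB ↦ ht _ ?_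
  simpa only [card_fin] using card_mem_Icc_of_mem_parts hB

theorem bell_congr (h : ∀ j ∈ Icc 1 k, t j = t' j) : bell t k = bell t' k := by
  rw [bell_eq_partitionSum_univ, bell_eq_partitionSum_univ]
  refine sum_congr rfl fun P _ ↦ prod_congr rfl fun B hB ↦ h _ ?_
  simpa only [card_fin] using card_mem_Icc_of_mem_parts hB

theorem bell_succ_ite_zero (t : ℕ → ℝ) (n : ℕ) :
    bell (fun j ↦ if j = n + 1 then 0 else t j) (n + 1) =
      ∑ j ∈ range n, n.choose j * (t (j + 1) * bell t (n - j)) := by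
  rw [bell_succ, sum_range_succ, if_pos rfl, zero_mul, mul_zero, add_zero]
  refine sum_congr rfl fun j hj ↦ ?_
  have hjn : j < n := mem_range.1 hj
  rw [if_neg (by omega), bell_congr fun i hi ↦ if_neg (by have := mem_Icc.1 hi; omega)]

theorem bell_eq_bell_ite_zero_add (t : ℕ → ℝ) (hk : 1 ≤ k) :
    bell t k = bell (fun j ↦ if j = k then 0 else t j) k + t k := by
  obtain ⟨n, rfl⟩ := Nat.exists_eq_add_of_le' hk
  rw [bell_succ_ite_zero, bell_succ, sum_range_succ, Nat.choose_self, Nat.sub_self, bell_zero,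
    Nat.cast_one, one_mul, mul_one]

theorem bell_ite_zero_le_sum_choose (hk : 1 ≤ k) (ht : ∀ j, 1 ≤ j → 0 ≤ t j) :
    bell (fun j ↦ if j = k then 0 else t j) k ≤
      ∑ l ∈ Icc 1 (k - 1), k.choose l * t l * bell t (k - l) := by
  obtain ⟨n, rfl⟩ := Nat.exists_eq_add_of_le' hk
  rw [bell_succ_ite_zero, Nat.add_sub_cancel, ← Ico_add_one_right_eq_Icc, sum_Ico_eq_sum_range,
    Nat.add_sub_cancel]
  refine sum_le_sum fun j _ ↦ ?_
  have choose_le : n.choose j ≤ (n + 1).choose (j + 1) := by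
    rw [Nat.choose_succ_succ]
    exact Nat.le_add_right _ _
  have t_nonneg : 0 ≤ t (j + 1) := ht _ (Nat.le_add_left 1 j)
  have b_nonneg : 0 ≤ bell t (n - j) := bell_nonneg fun i hi ↦ ht i (mem_Icc.1 hi).1
  rw [add_comm 1 j, Nat.add_sub_add_right, mul_assoc]
  gcongr

end Bell

section Convolution

variable {f g : ℕ → ℝ}

theorem sum_Icc_convolution_le_mul_sum_Icc (hf : ∀ k, 1 ≤ k → 0 ≤ f k)
    (hg : ∀ k, 1 ≤ k → 0 ≤ g k) {N n : ℕ} (hN : N ≤ n + 1) :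
    ∑ k ∈ Icc 1 N, ∑ l ∈ Icc 1 (k - 1), f l * g (k - l) ≤
      (∑ l ∈ Icc 1 n, f l) * ∑ m ∈ Icc 1 n, g m := by
  rw [sum_comm' (t' := Icc 1 n) (s' := fun l ↦ Icc (l + 1) N)
    (by simp only [mem_Icc]; omega), sum_mul]
  refine sum_le_sum fun l hl ↦ ?_
  have one_le_l : 1 ≤ l := (mem_Icc.1 hl).1
  rw [← mul_sum]
  refine mul_le_mul_of_nonneg_left ?_ (hf l one_le_l)
  calc ∑ k ∈ Icc (l + 1) N, g (k - l) = ∑ m ∈ Icc 1 (N - l), g m :=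
        sum_nbij' (· - l) (· + l) (by simp only [mem_Icc]; omega) (by simp only [mem_Icc]; omega)
          (by simp only [mem_Icc]; omega) (by simp only [mem_Icc]; omega) fun _ _ ↦ rfl
    _ ≤ ∑ m ∈ Icc 1 n, g m :=
        sum_le_sum_of_subset_of_nonneg (Icc_subset_Icc_right (by omega))
          fun m hm _ ↦ hg m (mem_Icc.1 hm).1

theorem sum_Icc_le_quarter_of_convolution_le {u b r η : ℕ → ℝ}
    (hu : ∀ k, 1 ≤ k → 0 ≤ u k) (hb : ∀ k, 1 ≤ k → 0 ≤ b k) (hη : ∀ k, 1 ≤ k → 0 ≤ η k)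
    (b_le : ∀ k, 1 ≤ k → b k ≤ u k + ∑ l ∈ Icc 1 (k - 1), u l * b (k - l))
    (u_le : ∀ k, 1 ≤ k → u k ≤
      r k + ∑ l ∈ Icc 1 (k - 1), u l * b (k - l) + ∑ l ∈ Icc 1 (k - 1), b l * η (k - l))
    (sum_r_le : ∀ n, ∑ k ∈ Icc 1 n, r k ≤ 1 / 8) (sum_η_le : ∀ n, ∑ k ∈ Icc 1 n, η k ≤ 1 / 8)
    (n : ℕ) : ∑ k ∈ Icc 1 n, u k ≤ 1 / 4 := by
  induction n with
  | zero => simp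
  | succ n ih =>
    set U := ∑ k ∈ Icc 1 n, u k
    set B := ∑ k ∈ Icc 1 n, b k
    have B_nonneg : 0 ≤ B := sum_nonneg fun k hk ↦ hb k (mem_Icc.1 hk).1
    have B_le : B ≤ U + U * B :=
      calc B ≤ ∑ k ∈ Icc 1 n, (u k + ∑ l ∈ Icc 1 (k - 1), u l * b (k - l)) :=
            sum_le_sum fun k hk ↦ b_le k (mem_Icc.1 hk).1
        _ ≤ U + U * B := by
            rw [sum_add_distrib]
            gcongr
            exact sum_Icc_convolution_le_mul_sum_Icc hu hb n.le_succ
    have B_le_third : B ≤ 1 / 3 := by nlinarith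
    calc ∑ k ∈ Icc 1 (n + 1), u k
        ≤ ∑ k ∈ Icc 1 (n + 1), (r k + ∑ l ∈ Icc 1 (k - 1), u l * b (k - l) +
            ∑ l ∈ Icc 1 (k - 1), b l * η (k - l)) :=
          sum_le_sum fun k hk ↦ u_le k (mem_Icc.1 hk).1
      _ ≤ 1 / 8 + U * B + B * ∑ k ∈ Icc 1 n, η k := by
          rw [sum_add_distrib, sum_add_distrib]
          gcongr
          · exact sum_r_le (n + 1)
          · exact sum_Icc_convolution_le_mul_sum_Icc hu hb le_rfl
          · exact sum_Icc_convolution_le_mul_sum_Icc hb hη le_rfl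
      _ ≤ 1 / 8 + U * B + B * (1 / 8) := by
          gcongr
          exact sum_η_le n
      _ ≤ 1 / 8 + 1 / 4 * (1 / 3) + 1 / 3 * (1 / 8) := by gcongr
      _ = 1 / 4 := by norm_num

end Convolution

section ExponentialGeneratingFunction

variable {X x D : ℝ} {f g t : ℕ → ℝ}

/-- The `k`-th term of the exponential generating function of `f` at `X`. -/
noncomputable def egfTerm (X : ℝ) (f : ℕ → ℝ) (k : ℕ) : ℝ := f k / k.factorial * X ^ k

/-- Binomial convolution of sequences, i.e. multiplication of their exponential generating
functions. -/
def binomConv (f g : ℕ → ℝ) (k : ℕ) : ℝ := ∑ l ∈ range (k + 1), k.choose l * f l * g (k - l)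

theorem binomConv_nonneg (hf : ∀ k, 0 ≤ f k) (hg : ∀ k, 0 ≤ g k) (k : ℕ) : 0 ≤ binomConv f g k :=
  sum_nonneg fun l _ ↦ mul_nonneg (mul_nonneg (Nat.cast_nonneg _) (hf l)) (hg _)

theorem egfTerm_nonneg {k : ℕ} (hX : 0 ≤ X) (hf : 0 ≤ f k) : 0 ≤ egfTerm X f k := by
  unfold egfTerm
  positivity

theorem egfTerm_div_eq_mul_pow {y : ℝ} {k : ℕ} (x : ℝ) (hD : D ≠ 0)
    (hf : f k = k.factorial * y * D ^ k) : egfTerm (x / D) f k = y * x ^ k := by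
  have : (k.factorial : ℝ) ≠ 0 := by positivity
  rw [egfTerm, hf, div_pow]
  field_simp

theorem le_of_egfTerm_div_le {y : ℝ} {k : ℕ} (hx : 0 < x) (hD : 0 < D)
    (h : egfTerm (x / D) f k ≤ y) : f k ≤ y * k.factorial * D ^ k * x⁻¹ ^ k := by
  have eq_mul : f k = egfTerm (x / D) f k * k.factorial * D ^ k * x⁻¹ ^ k := by
    have : (k.factorial : ℝ) ≠ 0 := by positivity
    rw [egfTerm, div_pow, inv_pow]
    field_simp
  rw [eq_mul]
  gcongr

theorem sum_choose_mul_div_factorial_mul_pow (X : ℝ) (f g : ℕ → ℝ) {k : ℕ} {s : Finset ℕ}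
    (hs : ∀ l ∈ s, l ≤ k) :
    (∑ l ∈ s, k.choose l * f l * g (k - l)) / k.factorial * X ^ k =
      ∑ l ∈ s, egfTerm X f l * egfTerm X g (k - l) := by
  rw [sum_div, sum_mul]
  refine sum_congr rfl fun l hl ↦ ?_
  rw [egfTerm, egfTerm, Nat.cast_choose ℝ (hs l hl), ← pow_mul_pow_sub X (hs l hl)]
  have : (k.factorial : ℝ) ≠ 0 := by positivity
  field_simp

theorem egfTerm_binomConv (X : ℝ) (f g : ℕ → ℝ) (k : ℕ) :
    egfTerm X (binomConv f g) k = ∑ l ∈ range (k + 1), egfTerm X f l * egfTerm X g (k - l) :=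
  sum_choose_mul_div_factorial_mul_pow X f g fun _ hl ↦ mem_range_succ_iff.1 hl

theorem egfTerm_binomConv_le {F G : ℝ}
    (hf0 : ∀ k, 0 ≤ egfTerm X f k) (hf : ∀ k, egfTerm X f k ≤ F * x ^ k)
    (hg0 : ∀ k, 0 ≤ egfTerm X g k) (hg : ∀ k, egfTerm X g k ≤ G * x ^ k) (k : ℕ) :
    egfTerm X (binomConv f g) k ≤ F * G * ((k + 1) * x ^ k) :=
  calc egfTerm X (binomConv f g) k
      = ∑ l ∈ range (k + 1), egfTerm X f l * egfTerm X g (k - l) := egfTerm_binomConv X f g k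
    _ ≤ ∑ l ∈ range (k + 1), (F * x ^ l) * (G * x ^ (k - l)) :=
        sum_le_sum fun l _ ↦ mul_le_mul (hf l) (hg _) (hg0 _) ((hf0 l).trans (hf l))
    _ = ∑ _l ∈ range (k + 1), F * G * x ^ k := by
        refine sum_congr rfl fun l hl ↦ ?_
        rw [mul_mul_mul_comm, pow_mul_pow_sub x (mem_range_succ_iff.1 hl)]
    _ = F * G * ((k + 1) * x ^ k) := by
        rw [sum_const, card_range, nsmul_eq_mul]
        push_cast
        ring

theorem bell_ite_zero_div_factorial_mul_pow_le (hX : 0 ≤ X) (ht : ∀ k, 1 ≤ k → 0 ≤ t k)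
    {k : ℕ} (hk : 1 ≤ k) :
    bell (fun j ↦ if j = k then 0 else t j) k / k.factorial * X ^ k ≤
      ∑ l ∈ Icc 1 (k - 1), egfTerm X t l * egfTerm X (bell t) (k - l) := by
  rw [← sum_choose_mul_div_factorial_mul_pow X t (bell t) (k := k) (by simp only [mem_Icc]; omega)]
  gcongr
  exact bell_ite_zero_le_sum_choose hk ht

theorem egfTerm_bell_le (hX : 0 ≤ X) (ht : ∀ k, 1 ≤ k → 0 ≤ t k) {k : ℕ} (hk : 1 ≤ k) :
    egfTerm X (bell t) k ≤
      egfTerm X t k + ∑ l ∈ Icc 1 (k - 1), egfTerm X t l * egfTerm X (bell t) (k - l) :=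
  calc egfTerm X (bell t) k
      = egfTerm X t k + bell (fun j ↦ if j = k then 0 else t j) k / k.factorial * X ^ k := by
        rw [egfTerm, egfTerm, bell_eq_bell_ite_zero_add t hk]
        ring
    _ ≤ _ := by
        gcongr
        exact bell_ite_zero_div_factorial_mul_pow_le hX ht hk

end ExponentialGeneratingFunction

section MajorantRecursion

variable {c h w : ℕ → ℝ} {X : ℝ}

/-- The sequence `(w_k)_{k ≥ 1}` satisfies the majorant recursion with source `c` and kernel `h`;
the paper's kernel is the binomial convolution of `a` with itself. The case `k = 1`, where the Bell
term and the last sum vanish, is the paper's separate initial condition `w₁ = c₁ + 2 c₀ a₁`. -/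
def MajorantRecursion (c h w : ℕ → ℝ) : Prop :=
  ∀ k, 1 ≤ k → w k = c k + bell (fun j ↦ if j = k then 0 else w j) k + c 0 * h k +
    ∑ l ∈ Icc 1 (k - 1), k.choose l * bell w l * h (k - l)

namespace MajorantRecursion

theorem nonneg (hw : MajorantRecursion c h w) (hc : ∀ k, 0 ≤ c k) (hh : ∀ k, 0 ≤ h k) {k : ℕ}
    (hk : 1 ≤ k) : 0 ≤ w k := by
  induction k using Nat.strong_induction_on with
  | _ k ih =>
    have bell_ite_nonneg : 0 ≤ bell (fun j ↦ if j = k then 0 else w j) k := by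
      refine bell_nonneg fun j hj ↦ ?_
      obtain ⟨one_le_j, j_le_k⟩ := mem_Icc.1 hj
      split_ifs with hjk
      · exact le_rfl
      · exact ih j (by omega) one_le_j
    have sum_nonneg : 0 ≤ ∑ l ∈ Icc 1 (k - 1), k.choose l * bell w l * h (k - l) := by
      refine sum_nonneg fun l hl ↦ mul_nonneg (mul_nonneg (Nat.cast_nonneg _) ?_) (hh _)
      refine bell_nonneg fun j hj ↦ ih j ?_ (mem_Icc.1 hj).1
      have := mem_Icc.1 hl
      have := mem_Icc.1 hj
      omega
    have source_nonneg : 0 ≤ c k + c 0 * h k := add_nonneg (hc k) (mul_nonneg (hc 0) (hh k))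
    rw [hw k hk]
    linarith

theorem egfTerm_le (hw : MajorantRecursion c h w) (hc : ∀ k, 0 ≤ c k) (hh : ∀ k, 0 ≤ h k)
    (hX : 0 ≤ X) {k : ℕ} (hk : 1 ≤ k) :
    egfTerm X w k ≤ (egfTerm X c k + c 0 * egfTerm X h k) +
      ∑ l ∈ Icc 1 (k - 1), egfTerm X w l * egfTerm X (bell w) (k - l) +
      ∑ l ∈ Icc 1 (k - 1), egfTerm X (bell w) l * egfTerm X h (k - l) := by
  have bell_le := bell_ite_zero_div_factorial_mul_pow_le hX (fun _ ↦ hw.nonneg hc hh) hk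
  rw [← sum_choose_mul_div_factorial_mul_pow X (bell w) h (k := k) (by simp only [mem_Icc]; omega)]
  calc egfTerm X w k = (egfTerm X c k + c 0 * egfTerm X h k) +
        bell (fun j ↦ if j = k then 0 else w j) k / k.factorial * X ^ k +
        (∑ l ∈ Icc 1 (k - 1), k.choose l * bell w l * h (k - l)) / k.factorial * X ^ k := by
        rw [egfTerm, hw k hk, egfTerm, egfTerm]
        ring
    _ ≤ _ := by gcongr

theorem egfTerm_le_quarter (hw : MajorantRecursion c h w) (hc : ∀ k, 0 ≤ c k)
    (hh : ∀ k, 0 ≤ h k) (hX : 0 ≤ X)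
    (sum_source_le : ∀ n, ∑ k ∈ Icc 1 n, (egfTerm X c k + c 0 * egfTerm X h k) ≤ 1 / 8)
    (sum_kernel_le : ∀ n, ∑ k ∈ Icc 1 n, egfTerm X h k ≤ 1 / 8) {k : ℕ} (hk : 1 ≤ k) :
    egfTerm X w k ≤ 1 / 4 := by
  have w_nonneg (k) (hk : 1 ≤ k) : 0 ≤ w k := hw.nonneg hc hh hk
  have egf_w_nonneg (k) (hk : 1 ≤ k) : 0 ≤ egfTerm X w k := egfTerm_nonneg hX (w_nonneg k hk)
  have egf_bell_nonneg (k) (_ : 1 ≤ k) : 0 ≤ egfTerm X (bell w) k :=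
    egfTerm_nonneg hX (bell_nonneg fun j hj ↦ w_nonneg j (mem_Icc.1 hj).1)
  calc egfTerm X w k ≤ ∑ j ∈ Icc 1 k, egfTerm X w j :=
        single_le_sum (fun j hj ↦ egf_w_nonneg j (mem_Icc.1 hj).1) (right_mem_Icc.2 hk)
    _ ≤ 1 / 4 :=
        sum_Icc_le_quarter_of_convolution_le egf_w_nonneg egf_bell_nonneg
          (fun k _ ↦ egfTerm_nonneg hX (hh k)) (fun _ ↦ egfTerm_bell_le hX w_nonneg)
          (fun _ ↦ hw.egfTerm_le hc hh hX) sum_source_le sum_kernel_le k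

theorem of_two_le {a : ℕ → ℝ} (ha : a 0 = 1) (w_one : w 1 = c 1 + 2 * c 0 * a 1)
    (hw : ∀ k, 2 ≤ k → w k = c k + bell (fun j ↦ if j = k then 0 else w j) k +
      c 0 * binomConv a a k +
      ∑ l ∈ Icc 1 (k - 1), k.choose l * bell w l * binomConv a a (k - l)) :
    MajorantRecursion c (binomConv a a) w := by
  intro k hk
  obtain rfl | two_le_k := hk.eq_or_lt
  · have binomConv_one : binomConv a a 1 = 2 * a 1 := by
      simp only [binomConv, sum_range_succ, range_zero, sum_empty, Nat.choose_zero_right,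
        Nat.choose_self, Nat.sub_zero, Nat.sub_self, Nat.cast_one, ha]
      ring
    have bell_ite_one : bell (fun j ↦ if j = 1 then 0 else w j) 1 = 0 := by
      simpa only [zero_add, range_zero, sum_empty] using bell_succ_ite_zero w 0
    rw [w_one, bell_ite_one, binomConv_one, Nat.sub_self, Icc_eq_empty (by norm_num), sum_empty]
    ring
  · exact hw k two_le_k

end MajorantRecursion

end MajorantRecursion

section GeometricData

variable {a c w : ℕ → ℝ} {K L D x : ℝ}

theorem sum_Icc_succ_mul_pow_le (hx : 0 ≤ x) (x_le : x ≤ 1 / 4) (n : ℕ) :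
    ∑ k ∈ Icc 1 n, (k + 1) * x ^ k ≤ 4 * x :=
  calc ∑ k ∈ Icc 1 n, (k + 1) * x ^ k ≤ ∑ k ∈ Icc 1 n, (2 * x) ^ k := by
        refine sum_le_sum fun k _ ↦ ?_
        have succ_le_two_pow : (k + 1 : ℝ) ≤ 2 ^ k := by exact_mod_cast Nat.lt_two_pow_self
        rw [mul_pow]
        gcongr
    _ ≤ (2 * x) ^ 1 / (1 - 2 * x) := by
        rw [← Ico_add_one_right_eq_Icc]
        exact geom_sum_Ico_le_of_lt_one (by positivity) (by linarith)
    _ ≤ 4 * x := by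
        rw [div_le_iff₀ (by linarith)]
        nlinarith

theorem sum_Icc_le_of_le_succ_mul_pow {f : ℕ → ℝ} {C : ℝ} (hC : 0 ≤ C) (hx : 0 ≤ x)
    (x_le : x ≤ 1 / 4) (hf : ∀ k, f k ≤ C * ((k + 1) * x ^ k)) (n : ℕ) :
    ∑ k ∈ Icc 1 n, f k ≤ C * (4 * x) :=
  calc ∑ k ∈ Icc 1 n, f k ≤ C * ∑ k ∈ Icc 1 n, (k + 1) * x ^ k := by
        rw [mul_sum]
        exact sum_le_sum fun k _ ↦ hf k
    _ ≤ C * (4 * x) := mul_le_mul_of_nonneg_left (sum_Icc_succ_mul_pow_le hx x_le n) hC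

theorem nonneg_of_eq_factorial_mul_pow (hK : 0 ≤ K) (hD : 0 ≤ D) (a_zero : a 0 = 1)
    (ha : ∀ k, 1 ≤ k → a k = k.factorial * K * D ^ k) (k : ℕ) : 0 ≤ a k := by
  obtain rfl | hk := Nat.eq_zero_or_pos k
  · simp only [a_zero, zero_le_one]
  · rw [ha k hk]
    positivity

theorem egfTerm_div_le_of_eq_factorial_mul_pow (hK : 0 ≤ K) (hx : 0 ≤ x) (hD : D ≠ 0)
    (a_zero : a 0 = 1) (ha : ∀ k, 1 ≤ k → a k = k.factorial * K * D ^ k) (k : ℕ) :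
    egfTerm (x / D) a k ≤ (1 + K) * x ^ k := by
  obtain rfl | hk := Nat.eq_zero_or_pos k
  · simp [egfTerm, a_zero, hK]
  · rw [egfTerm_div_eq_mul_pow x hD (ha k hk)]
    gcongr
    linarith

theorem exists_pos_le_quarter_mul_le {γ : ℝ} (hL : 0 ≤ L) (hγ : 0 ≤ γ) :
    ∃ x > 0, x ≤ 1 / 4 ∧ L * (1 + γ) * (4 * x) ≤ 1 / 8 ∧ γ * (4 * x) ≤ 1 / 8 := by
  have pos : 0 < 32 * ((1 + L) * (1 + γ)) := by positivity
  have Lγ_nonneg : 0 ≤ L * γ := by positivity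
  refine ⟨1 / (32 * ((1 + L) * (1 + γ))), by positivity, ?_, ?_, ?_⟩
  · rw [div_le_div_iff₀ pos (by norm_num)]
    linarith
  · rw [mul_one_div, mul_div_assoc', div_le_div_iff₀ pos (by norm_num)]
    linarith
  · rw [mul_one_div, mul_div_assoc', div_le_div_iff₀ pos (by norm_num)]
    linarith

theorem MajorantRecursion.egfTerm_div_le_quarter (hw : MajorantRecursion c (binomConv a a) w)
    (hK : 0 ≤ K) (hL : 0 ≤ L) (hD : 0 < D) (a_zero : a 0 = 1)
    (ha : ∀ k, 1 ≤ k → a k = k.factorial * K * D ^ k)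
    (hc : ∀ k, c k = k.factorial * (L * (k + 1)) * D ^ k) (hx : 0 ≤ x) (x_le : x ≤ 1 / 4)
    (source_le : L * (1 + (1 + K) * (1 + K)) * (4 * x) ≤ 1 / 8)
    (kernel_le : (1 + K) * (1 + K) * (4 * x) ≤ 1 / 8) {k : ℕ} (hk : 1 ≤ k) :
    egfTerm (x / D) w k ≤ 1 / 4 := by
  have hX : 0 ≤ x / D := by positivity
  have a_nonneg := nonneg_of_eq_factorial_mul_pow hK hD.le a_zero ha
  have c_nonneg (k) : 0 ≤ c k := by rw [hc]; positivity
  have c_zero : c 0 = L := by simp [hc]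
  have egf_a_nonneg (k) : 0 ≤ egfTerm (x / D) a k := egfTerm_nonneg hX (a_nonneg k)
  have egf_a_le := egfTerm_div_le_of_eq_factorial_mul_pow hK hx hD.ne' a_zero ha
  have kernel_term_le (k : ℕ) :
      egfTerm (x / D) (binomConv a a) k ≤ (1 + K) * (1 + K) * ((k + 1) * x ^ k) :=
    egfTerm_binomConv_le egf_a_nonneg egf_a_le egf_a_nonneg egf_a_le k
  have source_term_le (k : ℕ) :
      egfTerm (x / D) c k + c 0 * egfTerm (x / D) (binomConv a a) k ≤
        L * (1 + (1 + K) * (1 + K)) * ((k + 1) * x ^ k) :=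
    calc egfTerm (x / D) c k + c 0 * egfTerm (x / D) (binomConv a a) k
        ≤ L * (k + 1) * x ^ k + L * ((1 + K) * (1 + K) * ((k + 1) * x ^ k)) := by
          rw [egfTerm_div_eq_mul_pow x hD.ne' (hc k), c_zero]
          gcongr
          exact kernel_term_le k
      _ = L * (1 + (1 + K) * (1 + K)) * ((k + 1) * x ^ k) := by ring
  exact hw.egfTerm_le_quarter c_nonneg (binomConv_nonneg a_nonneg a_nonneg) hX
    (fun n ↦ (sum_Icc_le_of_le_succ_mul_pow (by positivity) hx x_le source_term_le n).trans
      source_le)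
    (fun n ↦ (sum_Icc_le_of_le_succ_mul_pow (by positivity) hx x_le kernel_term_le n).trans
      kernel_le) hk

end GeometricData

/-- generating-function bound for the majorant recursion; the
constants `C` and `χ` depend only on `M`, `A` and `d₀` (not on `D`). -/
theorem majorant_recursion_bound (M A d₀ : ℝ) (hM : 0 < M) (hA : 0 < A) (hd₀ : 0 < d₀) :
    ∃ C > (0 : ℝ), ∃ χ > (0 : ℝ),
      ∀ (D : ℝ), 0 < D →
      ∀ a c w : ℕ → ℝ,
        a 0 = 1 →
        (∀ k : ℕ, 1 ≤ k → a k = k.factorial * M * A * D ^ k) →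
        (∀ k : ℕ, c k = d₀ * M * A ^ 2 * (k + 1).factorial * D ^ k) →
        w 1 = c 1 + 2 * c 0 * a 1 →
        (∀ k : ℕ, 2 ≤ k →
          w k = c k + bell (fun j => if j = k then 0 else w j) k +
            c 0 * ∑ l ∈ Finset.range (k + 1), (k.choose l : ℝ) * a l * a (k - l) +
            ∑ l ∈ Finset.Icc 1 (k - 1), (k.choose l : ℝ) * bell w l *
              ∑ m ∈ Finset.range (k - l + 1),
                ((k - l).choose m : ℝ) * a m * a (k - l - m)) →
        ∀ k : ℕ, 1 ≤ k → w k ≤ C * k.factorial * D ^ k * χ ^ k := by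
  have hK : 0 ≤ M * A := by positivity
  have hL : 0 ≤ d₀ * M * A ^ 2 := by positivity
  obtain ⟨x, hx, x_le, source_le, kernel_le⟩ :=
    exists_pos_le_quarter_mul_le hL (mul_self_nonneg (1 + M * A))
  refine ⟨1 / 4, by norm_num, x⁻¹, inv_pos.2 hx, fun D hD a c w a_zero ha hc w_one hw k hk ↦ ?_⟩
  have ha' (k : ℕ) (hk : 1 ≤ k) : a k = k.factorial * (M * A) * D ^ k := by
    rw [ha k hk, mul_assoc (k.factorial : ℝ)]
  have hc' (k : ℕ) : c k = k.factorial * (d₀ * M * A ^ 2 * (k + 1)) * D ^ k := by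
    rw [hc, Nat.factorial_succ]
    push_cast
    ring
  have recursion : MajorantRecursion c (binomConv a a) w := .of_two_le a_zero w_one hw
  exact le_of_egfTerm_div_le hx hD <|
    recursion.egfTerm_div_le_quarter hK hL hD a_zero ha' hc' hx.le x_le source_le kernel_le hk
end
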